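/- arXiv:2403.13983 — 11 statements merged into one kernel-verified Lean document; each statement's English description precedes it below -/
import Mathlib

section
/- If a function v : P × S → ℝ satisfies strong graph-monotonicity on a communication graph G, then v is G-monotone. (Proposition: SGM implies graph monotonicity.) -/
open Finset

/-- A path on a communication graph with edge relation `E`. -/
def IsCommPath {S P : Type*} (E : S → P → Prop) {N : ℕ}
    (s : Fin (N + 1) → S) (p : Fin (N + 1) → P) : Prop :=
  Function.Injective s ∧ Function.Injective p ∧
    (∀ i, E (s i) (p i)) ∧ ∀ i : Fin N, E (s i.succ) (p i.castSucc)

/-- `v` is G-monotone. -/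
def GMonotone {S P : Type*} (E : S → P → Prop) (v : P × S → ℝ) : Prop :=
  ∀ N : ℕ, 1 ≤ N → ∀ (s : Fin (N + 1) → S) (p : Fin (N + 1) → P),
    IsCommPath E s p →
    0 < ∑ i : Fin (N + 1), (v (p i, s i) - v (p (i - 1), s i))

/-- `v` satisfies strong graph-monotonicity (SGM) on the communication graph `E`:
for every path `(s 0, p 0, …, s N, p N)` with `N ≥ 1`,
`v(p 0, s 0) − v(p N, s 0) ≥ v(p 0, s 1) − v(p N, s 1)`, strictly when `N = 1`. -/
def SGMonotone {S P : Type*} (E : S → P → Prop) (v : P × S → ℝ) : Prop :=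
  ∀ N : ℕ, 1 ≤ N → ∀ (s : Fin (N + 1) → S) (p : Fin (N + 1) → P),
    IsCommPath E s p →
    (v (p 0, s 0) - v (p (Fin.last N), s 0) ≥ v (p 0, s 1) - v (p (Fin.last N), s 1)) ∧
    (N = 1 → v (p 0, s 0) - v (p (Fin.last N), s 0) > v (p 0, s 1) - v (p (Fin.last N), s 1))

/-!
Deleting `s 0` and `p 0` from a path `(s 0, p 0, …, s N, p N)` leaves a path, and lowers the cyclic
sum by exactly `(v(p 0, s 0) − v(p N, s 0)) − (v(p 0, s 1) − v(p N, s 1))`, the quantity that SGM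
makes nonnegative, and positive when `N = 1`. A path with a single state has cyclic sum `0`, so
induction on `N` gives the result.
-/

/-- The sum of `v (p i, s i) - v (p (i - 1), s i)` around the cycle obtained by closing up the path
`(s 0, p 0, …, s N, p N)`. Index subtraction is modular in `Fin (N + 1)`, so that
`p (0 - 1) = p (Fin.last N)`. -/
def cycleSum {S P A : Type*} [AddCommGroup A] (v : P × S → A) {N : ℕ}
    (s : Fin (N + 1) → S) (p : Fin (N + 1) → P) : A :=
  ∑ i, (v (p i, s i) - v (p (i - 1), s i))

theorem sum_apply_sub_one_eq {A : Type*} [AddCommMonoid A] {N : ℕ}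
    (f : Fin (N + 1) → Fin (N + 1) → A) :
    ∑ i, f i (i - 1) = f 0 (Fin.last N) + ∑ i : Fin N, f i.succ i.castSucc := by
  have succ_sub_one (i : Fin N) : i.succ - 1 = i.castSucc := by
    rw [sub_eq_iff_eq_add, Fin.coeSucc_eq_succ]
  have zero_sub_one : (0 : Fin (N + 1)) - 1 = Fin.last N := by
    rw [sub_eq_iff_eq_add, Fin.last_add_one]
  simp only [Fin.sum_univ_succ, succ_sub_one, zero_sub_one]

section CycleSum

variable {S P A : Type*} [AddCommGroup A] (v : P × S → A)

theorem cycleSum_eq_add_sum {N : ℕ} (s : Fin (N + 1) → S) (p : Fin (N + 1) → P) :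
    cycleSum v s p = v (p 0, s 0) - v (p (Fin.last N), s 0) +
      ∑ i : Fin N, (v (p i.succ, s i.succ) - v (p i.castSucc, s i.succ)) :=
  sum_apply_sub_one_eq fun i j => v (p i, s i) - v (p j, s i)

theorem cycleSum_fin_one (s : Fin 1 → S) (p : Fin 1 → P) : cycleSum v s p = 0 := by
  simp [cycleSum]

theorem cycleSum_eq_sub_add_cycleSum_tail {N : ℕ} (s : Fin (N + 2) → S) (p : Fin (N + 2) → P) :
    cycleSum v s p =
      (v (p 0, s 0) - v (p (Fin.last (N + 1)), s 0) -
        (v (p 0, s 1) - v (p (Fin.last (N + 1)), s 1))) +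
      cycleSum v (Fin.tail s) (Fin.tail p) := by
  simp only [cycleSum_eq_add_sum, Fin.sum_univ_succ (n := N), Fin.tail, Fin.succ_last,
    Fin.succ_zero_eq_one, Fin.castSucc_zero, Fin.succ_castSucc]
  abel

end CycleSum

theorem IsCommPath.tail {S P : Type*} {E : S → P → Prop} {N : ℕ}
    {s : Fin (N + 2) → S} {p : Fin (N + 2) → P} (h : IsCommPath E s p) :
    IsCommPath E (Fin.tail s) (Fin.tail p) := by
  obtain ⟨s_injective, p_injective, edge, edge_succ⟩ := h
  exact ⟨s_injective.comp (Fin.succ_injective _), p_injective.comp (Fin.succ_injective _),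
    fun i => edge i.succ, fun i => edge_succ i.succ⟩

theorem sgMonotone_gMonotone_general {S P : Type*} (E : S → P → Prop) (v : P × S → ℝ)
    (hSGM : SGMonotone E v) : GMonotone E v := by
  intro N hN
  induction N, hN using Nat.le_induction with
  | base =>
    intro s p hpath
    change 0 < cycleSum v s p
    rw [cycleSum_eq_sub_add_cycleSum_tail, cycleSum_fin_one, add_zero]
    exact sub_pos.mpr ((hSGM 1 le_rfl s p hpath).2 rfl)
  | succ N _ ih =>
    intro s p hpath
    change 0 < cycleSum v s p
    rw [cycleSum_eq_sub_add_cycleSum_tail]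
    exact add_pos_of_nonneg_of_pos
      (sub_nonneg.mpr (hSGM (N + 1) (Nat.le_add_left 1 N) s p hpath).1) (ih _ _ hpath.tail)

/-- SGM implies graph monotonicity. -/
theorem sgMonotone_gMonotone {S P : Type*} [Fintype S] [Fintype P]
    (E : S → P → Prop) (v : P × S → ℝ)
    (hSGM : SGMonotone E v) : GMonotone E v :=
  sgMonotone_gMonotone_general E v hSGM
end

section
/- Let G be a communication graph with states S and message-actions P, let A be a finite set of pure outcomes, and assign to each p ∈ P a probability distribution π_p on A. Let v : A × S → ℝ and define the affine extension v̄ : P × S → ℝ by v̄(p, s) := ∑_{a ∈ A} π_p(a) · v(a, s). Suppose v satisfies semi-local increasing differences (SLID) with respect to G: for every path (s_0, p_0, …, s_N, p_N) on G with N ≥ 1 and all a_0 ∈ supp π_{p_0}, a_N ∈ supp π_{p_N}, one has v(a_0, s_0) − v(a_N, s_0) ≥ v(a_0, s_1) − v(a_N, s_1), and when N = 1 this inequality is strict for at least one pair (a_0, a_1) ∈ supp π_{p_0} × supp π_{p_1}. Then v̄ satisfies strong graph-monotonicity on G. (The inclusion SLID ⊆ SGM asserted in Section 5.) -/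
open Finset

/-! With `D a = v (a, s₀) - v (a, s₁)`, the SGM inequality rearranges to: the mean of `D` under
`π p_N` is at most its mean under `π p₀`. Both are means over `A × A` with respect to the product
distribution, and SLID compares the two integrands at every point of its support, strictly at one
of them when `N = 1`. -/

section ConvexCombinations

variable {𝕜 M ι κ : Type*} [Fintype ι] [Fintype κ] [Semiring 𝕜] [AddCommMonoid M] [Module 𝕜 M]

theorem sum_mul_smul_fst_eq_sum_smul (x : ι → 𝕜) {y : κ → 𝕜} (hy : ∑ j, y j = 1) (f : ι → M) :
    ∑ k : ι × κ, (x k.1 * y k.2) • f k.1 = ∑ i, x i • f i := by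
  simp only [Fintype.sum_prod_type, ← sum_smul, ← mul_sum, hy, mul_one]

theorem sum_mul_smul_snd_eq_sum_smul {x : ι → 𝕜} (hx : ∑ i, x i = 1) (y : κ → 𝕜) (g : κ → M) :
    ∑ k : ι × κ, (x k.1 * y k.2) • g k.2 = ∑ j, y j • g j := by
  simp only [Fintype.sum_prod_type_right, ← sum_smul, ← sum_mul, hx, one_mul]

variable [PartialOrder 𝕜] [PartialOrder M] {x : ι → 𝕜} {y : κ → 𝕜} {f : ι → M} {g : κ → M}

theorem mul_smul_le_mul_smul_of_pos_imp_le [PosMulMono 𝕜] [PosSMulMono 𝕜 M]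
    {r s : 𝕜} (hr : 0 ≤ r) (hs : 0 ≤ s) {u w : M} (h : 0 < r → 0 < s → u ≤ w) :
    (r * s) • u ≤ (r * s) • w := by
  obtain rfl | hr' := hr.eq_or_lt
  · simp
  obtain rfl | hs' := hs.eq_or_lt
  · simp
  exact smul_le_smul_of_nonneg_left (h hr' hs') (mul_nonneg hr hs)

theorem sum_smul_le_sum_smul_of_mem_stdSimplex [PosMulMono 𝕜] [PosSMulMono 𝕜 M]
    [IsOrderedAddMonoid M] (hx : x ∈ stdSimplex 𝕜 ι) (hy : y ∈ stdSimplex 𝕜 κ)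
    (hgf : ∀ i j, 0 < x i → 0 < y j → g j ≤ f i) :
    ∑ j, y j • g j ≤ ∑ i, x i • f i := by
  rw [← sum_mul_smul_snd_eq_sum_smul hx.2, ← sum_mul_smul_fst_eq_sum_smul x hy.2]
  exact sum_le_sum fun k _ ↦ mul_smul_le_mul_smul_of_pos_imp_le (hx.1 _) (hy.1 _) (hgf k.1 k.2)

theorem sum_smul_lt_sum_smul_of_mem_stdSimplex [PosMulStrictMono 𝕜] [PosSMulStrictMono 𝕜 M]
    [IsOrderedCancelAddMonoid M] (hx : x ∈ stdSimplex 𝕜 ι) (hy : y ∈ stdSimplex 𝕜 κ)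
    (hgf : ∀ i j, 0 < x i → 0 < y j → g j ≤ f i)
    (hlt : ∃ i j, 0 < x i ∧ 0 < y j ∧ g j < f i) :
    ∑ j, y j • g j < ∑ i, x i • f i := by
  obtain ⟨i, j, hi, hj, hij⟩ := hlt
  rw [← sum_mul_smul_snd_eq_sum_smul hx.2, ← sum_mul_smul_fst_eq_sum_smul x hy.2]
  exact sum_lt_sum
    (fun k _ ↦ mul_smul_le_mul_smul_of_pos_imp_le (hx.1 _) (hy.1 _) (hgf k.1 k.2))
    ⟨(i, j), mem_univ _, smul_lt_smul_of_pos_left hij (mul_pos hi hj)⟩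

end ConvexCombinations

section CommunicationGraph

variable {S P A : Type*}

/-- Semi-local increasing differences (SLID) of `v` on the communication graph `E`, where the
message-action `p` induces the distribution `π p` on outcomes. Membership of `a` in the support of
`π p` is encoded as `0 < π p a`. -/
def SemiLocalIncreasingDifferences (E : S → P → Prop) (π : P → A → ℝ) (v : A × S → ℝ) : Prop :=
  ∀ N : ℕ, 1 ≤ N → ∀ (s : Fin (N + 1) → S) (p : Fin (N + 1) → P), IsCommPath E s p →
    (∀ a0 aN : A, 0 < π (p 0) a0 → 0 < π (p (Fin.last N)) aN →
      v (a0, s 0) - v (aN, s 0) ≥ v (a0, s 1) - v (aN, s 1)) ∧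
    (N = 1 → ∃ a0 a1 : A, 0 < π (p 0) a0 ∧ 0 < π (p (Fin.last N)) a1 ∧
      v (a0, s 0) - v (a1, s 0) > v (a0, s 1) - v (a1, s 1))

variable [Fintype A] {E : S → P → Prop} {π : P → A → ℝ} {v : A × S → ℝ}

/-- The affine extension `v̄` of `v` from pure outcomes to message-actions: the expected value of
`v (·, s)` under the outcome distribution `π p`. -/
def affineExtension (π : P → A → ℝ) (v : A × S → ℝ) : P × S → ℝ :=
  fun q ↦ ∑ a, π q.1 a * v (a, q.2)

theorem affineExtension_sub_affineExtension (π : P → A → ℝ) (v : A × S → ℝ) (p : P) (s t : S) :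
    affineExtension π v (p, s) - affineExtension π v (p, t) =
      ∑ a, π p a • (v (a, s) - v (a, t)) := by
  simp only [affineExtension, smul_eq_mul, mul_sub, sum_sub_distrib]

theorem affineExtension_sub_le_sub {p q : P} {s t : S}
    (hp : π p ∈ stdSimplex ℝ A) (hq : π q ∈ stdSimplex ℝ A)
    (h : ∀ a b, 0 < π p a → 0 < π q b → v (a, t) - v (b, t) ≤ v (a, s) - v (b, s)) :
    affineExtension π v (p, t) - affineExtension π v (q, t) ≤
      affineExtension π v (p, s) - affineExtension π v (q, s) := by
  have hmean : affineExtension π v (q, s) - affineExtension π v (q, t) ≤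
      affineExtension π v (p, s) - affineExtension π v (p, t) := by
    simp only [affineExtension_sub_affineExtension]
    exact sum_smul_le_sum_smul_of_mem_stdSimplex hp hq fun a b ha hb ↦ by linarith [h a b ha hb]
  linarith

theorem affineExtension_sub_lt_sub {p q : P} {s t : S}
    (hp : π p ∈ stdSimplex ℝ A) (hq : π q ∈ stdSimplex ℝ A)
    (hle : ∀ a b, 0 < π p a → 0 < π q b → v (a, t) - v (b, t) ≤ v (a, s) - v (b, s))
    (hlt : ∃ a b, 0 < π p a ∧ 0 < π q b ∧ v (a, t) - v (b, t) < v (a, s) - v (b, s)) :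
    affineExtension π v (p, t) - affineExtension π v (q, t) <
      affineExtension π v (p, s) - affineExtension π v (q, s) := by
  obtain ⟨a, b, ha, hb, hab⟩ := hlt
  have hmean : affineExtension π v (q, s) - affineExtension π v (q, t) <
      affineExtension π v (p, s) - affineExtension π v (p, t) := by
    simp only [affineExtension_sub_affineExtension]
    exact sum_smul_lt_sum_smul_of_mem_stdSimplex hp hq
      (fun a b ha hb ↦ by linarith [hle a b ha hb]) ⟨a, b, ha, hb, by linarith⟩
  linarith

theorem slid_implies_sgm_general (hπ : ∀ p, π p ∈ stdSimplex ℝ A)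
    (hv : SemiLocalIncreasingDifferences E π v) :
    SGMonotone E (affineExtension π v) := by
  intro N hN s p hsp
  obtain ⟨hle, hlt⟩ := hv N hN s p hsp
  exact ⟨affineExtension_sub_le_sub (hπ _) (hπ _) hle,
    fun hN1 ↦ affineExtension_sub_lt_sub (hπ _) (hπ _) hle (hlt hN1)⟩

end CommunicationGraph

/-- Semi-local increasing differences (SLID) implies that the affine extension
`v̄(p, s) = ∑ a, π p a • v(a, s)` satisfies strong graph-monotonicity. -/
theorem slid_implies_sgm {S P A : Type*} [Fintype S] [Fintype P] [Fintype A]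
    (E : S → P → Prop)
    (π : P → A → ℝ) (hπnn : ∀ p a, 0 ≤ π p a) (hπsum : ∀ p, ∑ a, π p a = 1)
    (v : A × S → ℝ)
    (hSLID : ∀ N : ℕ, 1 ≤ N → ∀ (s : Fin (N + 1) → S) (p : Fin (N + 1) → P),
      IsCommPath E s p →
      (∀ a0 aN : A, 0 < π (p 0) a0 → 0 < π (p (Fin.last N)) aN →
        v (a0, s 0) - v (aN, s 0) ≥ v (a0, s 1) - v (aN, s 1)) ∧
      (N = 1 → ∃ a0 a1 : A, 0 < π (p 0) a0 ∧ 0 < π (p (Fin.last N)) a1 ∧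
        v (a0, s 0) - v (a1, s 0) > v (a0, s 1) - v (a1, s 1))) :
    SGMonotone E (fun q => ∑ a, π q.1 a * v (a, q.2)) :=
  slid_implies_sgm_general (fun p ↦ ⟨hπnn p, hπsum p⟩) hSLID
end

section
/- Let X be a type, N ≥ 2 a natural number, x_1, …, x_N ∈ X, u : X → ℝ, v_1, …, v_N : X → ℝ, and ε > 0. Set x_0 := x_N. If u(x_i) − u(x_{i−1}) + ε·(v_i(x_i) − v_i(x_{i−1})) = 0 for all i = 2, …, N, and u(x_N) − u(x_1) + ε·(v_1(x_N) − v_1(x_1)) ≤ 0, then ∑_{i=1}^{N} ( v_i(x_i) − v_i(x_{i−1}) ) ≥ 0. (This is the key computation in the necessity direction of the main theorem: a family of sender-incentive-compatible approximating actions along a path of indifferences forces the cyclic graph-monotonicity sum to be nonnegative; hence graph monotonicity is necessary for 𝒪-stability.) -/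
open Finset

/-! Each action `x i` serves once as the action reached in state `i` and once as the one left in the
next state, so around the cycle the transparent utility `u` telescopes to zero: the net gains from
the preferences add up to `ε` times the cyclic sum, and `ε` is positive. -/

theorem sum_Icc_add_one_sub_pred {G : Type*} [AddCommGroup G] (f : ℕ → G) {m n : ℕ}
    (hmn : m ≤ n) : ∑ i ∈ Icc (m + 1) n, (f i - f (i - 1)) = f n - f m := by
  rw [← sum_Ico_sub f hmn, ← Ico_add_one_right_eq_Icc, ← sum_Ico_add' _ m n 1]
  simp only [Nat.add_sub_cancel]

theorem cyclic_sum_nonneg_of_indifferences_general {X R : Type*} [Ring R] [LinearOrder R]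
    [IsStrictOrderedRing R] (N : ℕ) (x : ℕ → X) (u : X → R) (v : ℕ → X → R) (ε : R) (hε : 0 < ε)
    (hx0 : x 0 = x N)
    (hpref : ∀ i, 1 ≤ i → i ≤ N →
      u (x (i - 1)) + ε * v i (x (i - 1)) ≤ u (x i) + ε * v i (x i)) :
    0 ≤ ∑ i ∈ Icc 1 N, (v i (x i) - v i (x (i - 1))) := by
  have u_telescopes : ∑ i ∈ Icc 1 N, (u (x i) - u (x (i - 1))) = 0 := by
    rw [sum_Icc_add_one_sub_pred (fun i ↦ u (x i)) N.zero_le, hx0, sub_self]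
  refine nonneg_of_mul_nonneg_right ?_ hε
  calc
    0 ≤ ∑ i ∈ Icc 1 N, (u (x i) + ε * v i (x i) - (u (x (i - 1)) + ε * v i (x (i - 1)))) :=
      sum_nonneg fun i hi ↦ sub_nonneg.2 (hpref i (mem_Icc.1 hi).1 (mem_Icc.1 hi).2)
    _ = ∑ i ∈ Icc 1 N, (u (x i) - u (x (i - 1))) +
          ε * ∑ i ∈ Icc 1 N, (v i (x i) - v i (x (i - 1))) := by
      simp only [add_sub_add_comm, ← mul_sub, sum_add_distrib, mul_sum]
    _ = ε * ∑ i ∈ Icc 1 N, (v i (x i) - v i (x (i - 1))) := by rw [u_telescopes, zero_add]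

/-- Necessity computation: if along a cycle of message-actions `x 1, …, x N`
(with `x 0 := x N`) the sender in state `i` is indifferent between `x (i-1)` and `x i`
for `i = 2, …, N`, and the sender in state `1` weakly prefers `x 1` to `x N`, then the
cyclic graph-monotonicity sum is nonnegative. -/
theorem cyclic_sum_nonneg_of_indifferences {X : Type*} (N : ℕ) (hN : 2 ≤ N)
    (x : ℕ → X) (u : X → ℝ) (v : ℕ → X → ℝ) (ε : ℝ) (hε : 0 < ε)
    (hx0 : x 0 = x N)
    (hindiff : ∀ i, 2 ≤ i → i ≤ N →
      u (x i) - u (x (i - 1)) + ε * (v i (x i) - v i (x (i - 1))) = 0)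
    (hpref : u (x N) - u (x 1) + ε * (v 1 (x N) - v 1 (x 1)) ≤ 0) :
    0 ≤ ∑ i ∈ Finset.Icc 1 N, (v i (x i) - v i (x (i - 1))) :=
  cyclic_sum_nonneg_of_indifferences_general N x u v ε hε hx0 fun
    | 1, _, _ => by simp only [Nat.sub_self, hx0]; linarith
    | i + 2, _, hiN => by linarith [hindiff (i + 2) (by lia) hiN]
end

section
/- Let X be a type, N ≥ 2 a natural number, x_1, …, x_N ∈ X, u : X → ℝ, v_1, …, v_N : X → ℝ, and ε > 0. Set x_0 := x_N. If u(x_i) − u(x_{i−1}) + ε·(v_i(x_i) − v_i(x_{i−1})) = 0 for all i = 2, …, N, and ∑_{i=1}^{N} ( v_i(x_i) − v_i(x_{i−1}) ) > 0, then u(x_1) + ε·v_1(x_1) > u(x_N) + ε·v_1(x_N). (This is the key computation in the sufficiency direction of the main theorem: along a chain of neighbouring indifferences, strict graph-monotonicity of the modification generates a strict preference for neighbouring message-actions over non-neighbouring ones.) -/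
open Finset

/-!
Summed around the cycle, the transparent parts `u (x i) - u (x (i - 1))` of the sender's gains
cancel, so the total gain is `ε` times the graph-monotonicity sum and hence positive. Some state
therefore strictly gains from its step, and it can only be state `1`.
-/

theorem sum_Icc_sub_pred {M : Type*} [AddCommGroup M] (f : ℕ → M) {m n : ℕ} (hmn : m ≤ n) :
    ∑ i ∈ Icc (m + 1) n, (f i - f (i - 1)) = f n - f m := by
  rw [← Ico_add_one_right_eq_Icc, ← sum_Ico_add']
  exact sum_Ico_sub f hmn

theorem sum_Icc_sub_pred_add_mul_of_eq {R : Type*} [Ring R] {f : ℕ → R} {m n : ℕ} (hmn : m ≤ n)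
    (hf : f m = f n) (ε : R) (d : ℕ → R) :
    ∑ i ∈ Icc (m + 1) n, (f i - f (i - 1) + ε * d i) = ε * ∑ i ∈ Icc (m + 1) n, d i := by
  rw [sum_add_distrib, sum_Icc_sub_pred f hmn, hf, sub_self, zero_add, mul_sum]

theorem strict_pref_of_gMonotone_sum_general {X R : Type*}
    [Ring R] [LinearOrder R] [IsStrictOrderedRing R] (N : ℕ)
    (x : ℕ → X) (u : X → R) (v : ℕ → X → R) (ε : R) (hε : 0 < ε)
    (hx0 : x 0 = x N)
    (hstep : ∀ i, 2 ≤ i → i ≤ N →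
      u (x i) - u (x (i - 1)) + ε * (v i (x i) - v i (x (i - 1))) ≤ 0)
    (hsum : 0 < ∑ i ∈ Icc 1 N, (v i (x i) - v i (x (i - 1)))) :
    u (x N) + ε * v 1 (x N) < u (x 1) + ε * v 1 (x 1) := by
  have total_gain_pos :
      0 < ∑ i ∈ Icc 1 N, (u (x i) - u (x (i - 1)) + ε * (v i (x i) - v i (x (i - 1)))) := by
    rw [sum_Icc_sub_pred_add_mul_of_eq (f := fun i ↦ u (x i)) N.zero_le (congrArg u hx0)]
    exact mul_pos hε hsum
  obtain ⟨i, hi, gain_pos⟩ := exists_lt_of_sum_lt (sum_const_zero.trans_lt total_gain_pos)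
  obtain ⟨one_le, le_N⟩ := mem_Icc.mp hi
  obtain rfl | two_le := one_le.eq_or_lt
  · rwa [Nat.sub_self, hx0, mul_sub, ← add_sub_add_comm, sub_pos] at gain_pos
  · exact absurd gain_pos (hstep i two_le le_N).not_gt

/-- Sufficiency computation: if along a cycle of message-actions `x 1, …, x N`
(with `x 0 := x N`) the sender in state `i` is indifferent between `x (i-1)` and `x i`
for `i = 2, …, N`, and the cyclic graph-monotonicity sum is strictly positive, then the
sender in state `1` strictly prefers `x 1` to `x N`. -/
theorem strict_pref_of_gMonotone_sum {X : Type*} (N : ℕ) (hN : 2 ≤ N)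
    (x : ℕ → X) (u : X → ℝ) (v : ℕ → X → ℝ) (ε : ℝ) (hε : 0 < ε)
    (hx0 : x 0 = x N)
    (hindiff : ∀ i, 2 ≤ i → i ≤ N →
      u (x i) - u (x (i - 1)) + ε * (v i (x i) - v i (x (i - 1))) = 0)
    (hsum : 0 < ∑ i ∈ Finset.Icc 1 N, (v i (x i) - v i (x (i - 1)))) :
    u (x 1) + ε * v 1 (x 1) > u (x N) + ε * v 1 (x N) :=
  strict_pref_of_gMonotone_sum_general N x u v ε hε hx0
    (fun i two_le le_N ↦ (hindiff i two_le le_N).le) hsum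
end

section
/- Let S be a finite state set, M a message set, ψ : M → S a bijection, ℓ : S → ℝ with ℓ(s) < 0 for all s, and v_LA the lying-aversion modification. Let G be a communication graph on states S and message-actions M whose edge relation contains (θ_1, m_1), (θ_2, m_1) and (θ_2, m_2), where θ_1 ≠ θ_2 and m_1 ≠ m_2. If v_LA is G-monotone, then ψ(m_1) = θ_1 or ψ(m_2) = θ_2. (Lemma: N-shaped subgraphs.) -/
open Finset

/-- The lying-aversion modification: message `m` is the claim `the state is ψ m`;
telling the truth is free, any lie in state `s` costs `ℓ s < 0`. -/
def vLA {M S : Type*} [DecidableEq S] (ψ : M ≃ S) (ℓ : S → ℝ) : M × S → ℝ :=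
  fun q => if ψ q.1 = q.2 then 0 else ℓ q.2

theorem isCommPath_pair {S P : Type*} {E : S → P → Prop} {s₀ s₁ : S} {p₀ p₁ : P}
    (hs : s₀ ≠ s₁) (hp : p₀ ≠ p₁) (h₀₀ : E s₀ p₀) (h₁₀ : E s₁ p₀) (h₁₁ : E s₁ p₁) :
    IsCommPath E ![s₀, s₁] ![p₀, p₁] :=
  ⟨List.nodup_ofFn.mp (by simpa using hs), List.nodup_ofFn.mp (by simpa using hp),
    Fin.forall_fin_two.mpr ⟨h₀₀, h₁₁⟩, Fin.forall_fin_one.mpr h₁₀⟩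

theorem GMonotone.add_lt_add_of_edges {S P : Type*} {E : S → P → Prop} {v : P × S → ℝ}
    (hv : GMonotone E v) {s₀ s₁ : S} {p₀ p₁ : P} (hs : s₀ ≠ s₁) (hp : p₀ ≠ p₁)
    (h₀₀ : E s₀ p₀) (h₁₀ : E s₁ p₀) (h₁₁ : E s₁ p₁) :
    v (p₁, s₀) + v (p₀, s₁) < v (p₀, s₀) + v (p₁, s₁) := by
  simpa [Fin.sum_univ_two] using hv 1 le_rfl _ _ (isCommPath_pair hs hp h₀₀ h₁₀ h₁₁)

section LyingAversion

variable {S M : Type*} [DecidableEq S] {ψ : M ≃ S} {ℓ : S → ℝ} {m : M} {s : S}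

theorem vLA_of_ne (h : ψ m ≠ s) : vLA ψ ℓ (m, s) = ℓ s :=
  if_neg h

theorem le_vLA (hs : ℓ s ≤ 0) : ℓ s ≤ vLA ψ ℓ (m, s) := by
  unfold vLA
  split_ifs
  exacts [hs, le_rfl]

end LyingAversion

theorem n_shaped_subgraph_general {S M : Type*} [DecidableEq S]
    (ψ : M ≃ S) (ℓ : S → ℝ) (E : S → M → Prop) (θ1 θ2 : S) (m1 m2 : M)
    (hℓ1 : ℓ θ1 ≤ 0) (hℓ2 : ℓ θ2 ≤ 0) (hθ : θ1 ≠ θ2) (hm : m1 ≠ m2)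
    (h11 : E θ1 m1) (h21 : E θ2 m1) (h22 : E θ2 m2)
    (hGM : GMonotone E (vLA ψ ℓ)) :
    ψ m1 = θ1 ∨ ψ m2 = θ2 := by
  by_contra! ⟨lie1, lie2⟩
  -- Both states lie, so each already has its lowest payoff and exchanging messages cannot hurt.
  apply (hGM.add_lt_add_of_edges hθ hm h11 h21 h22).not_ge
  calc vLA ψ ℓ (m1, θ1) + vLA ψ ℓ (m2, θ2)
      = ℓ θ1 + ℓ θ2 := by rw [vLA_of_ne lie1, vLA_of_ne lie2]
    _ ≤ vLA ψ ℓ (m2, θ1) + vLA ψ ℓ (m1, θ2) := add_le_add (le_vLA hℓ1) (le_vLA hℓ2)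

/-- N-shaped subgraphs lemma: if states `θ1, θ2` both send `m1` and `θ2` also sends `m2`,
and the lying-aversion modification is G-monotone, then `ψ m1 = θ1` or `ψ m2 = θ2`. -/
theorem n_shaped_subgraph {S M : Type*} [Fintype S] [Fintype M] [DecidableEq S]
    (ψ : M ≃ S) (ℓ : S → ℝ) (hℓ : ∀ s, ℓ s < 0)
    (E : S → M → Prop) (θ1 θ2 : S) (m1 m2 : M)
    (hθ : θ1 ≠ θ2) (hm : m1 ≠ m2)
    (h11 : E θ1 m1) (h21 : E θ2 m1) (h22 : E θ2 m2)
    (hGM : GMonotone E (vLA ψ ℓ)) :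
    ψ m1 = θ1 ∨ ψ m2 = θ2 :=
  n_shaped_subgraph_general ψ ℓ E θ1 θ2 m1 m2 (hℓ θ1).le (hℓ θ2).le hθ hm h11 h21 h22 hGM
end

section
/- Let S be a finite state set, M a message set, ψ : M → S a bijection, ℓ : S → ℝ with ℓ(s) < 0 for all s, and v_LA the lying-aversion modification. Let G be a communication graph on states S and message-actions M whose edge relation contains (θ_1, m_1), (θ_2, m_1), (θ_2, m_2), (θ_3, m_2) and (θ_4, m_2), where θ_1, θ_2, θ_3, θ_4 are pairwise distinct states and m_1 ≠ m_2. Then v_LA is not G-monotone. (Impossibility of the second forbidden subgraph in the proof of the lying-aversion characterization.) -/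
open Finset

/-!
Put `Δ θ = v (m2, θ) - v (m1, θ)`. The three paths with two states that pass through `θ2` force
`Δ θ1 < Δ θ2 < Δ θ3` and `Δ θ2 < Δ θ4`. For the lying-aversion modification, `Δ` can be
negative only at `ψ m1` and positive only at `ψ m2`. So `Δ θ2 < 0` gives `θ1 = ψ m1 = θ2`, while
`0 ≤ Δ θ2` gives `θ3 = ψ m2 = θ4`.
-/

theorem isCommPath_pair_s7 {S P : Type*} {E : S → P → Prop} {s t : S} {p q : P} (hst : s ≠ t)
    (hpq : p ≠ q) (hsp : E s p) (htp : E t p) (htq : E t q) :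
    IsCommPath E ![s, t] ![p, q] :=
  ⟨injective_pair_iff_ne.mpr hst, injective_pair_iff_ne.mpr hpq,
    Fin.forall_fin_two.mpr ⟨hsp, htq⟩, Fin.forall_fin_one.mpr htp⟩

theorem GMonotone.sub_lt_sub {S P : Type*} {E : S → P → Prop} {v : P × S → ℝ}
    (hv : GMonotone E v) {s t : S} {p q : P} (hst : s ≠ t) (hpq : p ≠ q)
    (hsp : E s p) (htp : E t p) (htq : E t q) :
    v (q, s) - v (p, s) < v (q, t) - v (p, t) := by
  have hsum : 0 < v (p, s) - v (q, s) + (v (q, t) - v (p, t)) :=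
    (hv 1 le_rfl ![s, t] ![p, q] (isCommPath_pair_s7 hst hpq hsp htp htq)).trans_eq
      (Fin.sum_univ_two _)
  linarith

theorem apply_eq_of_vLA_lt_vLA {S M : Type*} [DecidableEq S] {ψ : M ≃ S} {ℓ : S → ℝ} {s : S}
    {m n : M} (hs : ℓ s ≤ 0) (hlt : vLA ψ ℓ (m, s) < vLA ψ ℓ (n, s)) : ψ n = s := by
  by_contra hn
  have le_vLA : ℓ s ≤ vLA ψ ℓ (m, s) := by
    unfold vLA
    split_ifs
    exacts [hs, le_rfl]
  have vLA_eq : vLA ψ ℓ (n, s) = ℓ s := if_neg hn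
  exact (le_vLA.trans_lt hlt).ne' vLA_eq

theorem forbidden_subgraph_two_general {S M : Type*} [DecidableEq S]
    (ψ : M ≃ S) (ℓ : S → ℝ) (hℓ : ∀ s, ℓ s ≤ 0)
    (E : S → M → Prop) (θ1 θ2 θ3 θ4 : S) (m1 m2 : M)
    (hθ12 : θ1 ≠ θ2) (hθ23 : θ2 ≠ θ3) (hθ24 : θ2 ≠ θ4) (hθ34 : θ3 ≠ θ4) (hm12 : m1 ≠ m2)
    (h11 : E θ1 m1) (h21 : E θ2 m1) (h22 : E θ2 m2) (h32 : E θ3 m2) (h42 : E θ4 m2) :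
    ¬ GMonotone E (vLA ψ ℓ) := by
  intro hv
  have lt12 := hv.sub_lt_sub hθ12 hm12 h11 h21 h22
  have lt23 := hv.sub_lt_sub hθ23.symm hm12.symm h32 h22 h21
  have lt24 := hv.sub_lt_sub hθ24.symm hm12.symm h42 h22 h21
  rcases lt_or_ge (vLA ψ ℓ (m2, θ2)) (vLA ψ ℓ (m1, θ2)) with hneg | hnonneg
  · have hψ1 : ψ m1 = θ1 := apply_eq_of_vLA_lt_vLA (m := m2) (hℓ θ1) (by linarith)
    have hψ2 : ψ m1 = θ2 := apply_eq_of_vLA_lt_vLA (hℓ θ2) hneg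
    exact hθ12 (hψ1.symm.trans hψ2)
  · have hψ3 : ψ m2 = θ3 := apply_eq_of_vLA_lt_vLA (m := m1) (hℓ θ3) (by linarith)
    have hψ4 : ψ m2 = θ4 := apply_eq_of_vLA_lt_vLA (m := m1) (hℓ θ4) (by linarith)
    exact hθ34 (hψ3.symm.trans hψ4)

/-- Impossibility of the second forbidden subgraph: if the edge relation contains
`(θ1,m1), (θ2,m1), (θ2,m2), (θ3,m2), (θ4,m2)` with pairwise-distinct states and
`m1 ≠ m2`, then the lying-aversion modification is not G-monotone. -/
theorem forbidden_subgraph_two {S M : Type*} [Fintype S] [Fintype M] [DecidableEq S]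
    (ψ : M ≃ S) (ℓ : S → ℝ) (hℓ : ∀ s, ℓ s < 0)
    (E : S → M → Prop) (θ1 θ2 θ3 θ4 : S) (m1 m2 : M)
    (hθ12 : θ1 ≠ θ2) (hθ13 : θ1 ≠ θ3) (hθ14 : θ1 ≠ θ4)
    (hθ23 : θ2 ≠ θ3) (hθ24 : θ2 ≠ θ4) (hθ34 : θ3 ≠ θ4)
    (hm12 : m1 ≠ m2)
    (h11 : E θ1 m1) (h21 : E θ2 m1) (h22 : E θ2 m2) (h32 : E θ3 m2) (h42 : E θ4 m2) :
    ¬ GMonotone E (vLA ψ ℓ) := by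
  exact forbidden_subgraph_two_general ψ ℓ (fun s => (hℓ s).le) E θ1 θ2 θ3 θ4 m1 m2
    hθ12 hθ23 hθ24 hθ34 hm12 h11 h21 h22 h32 h42
end

section
/- Let Θ be a finite linearly ordered set, A a finite set, and u_R : A × Θ → ℝ a ≻-single-crossing receiver utility: for all distinct a, a' ∈ A the map θ ↦ u_R(a, θ) − u_R(a', θ) is strictly monotone (either strictly increasing or strictly decreasing). Let θ* ∈ Θ, and let ν_0 and ν_N be probability distributions on Θ with supp ν_0 ⊆ { θ : θ ≤ θ* } and supp ν_N ⊆ { θ : θ ≥ θ* }, such that ν_0 and ν_N are not both equal to the point mass at θ*. Suppose a_0 ∈ A maximizes a ↦ ∑_θ ν_0(θ)·u_R(a, θ) over A, a_N ∈ A maximizes a ↦ ∑_θ ν_N(θ)·u_R(a, θ) over A, and a_0 ≠ a_N. Then the map θ ↦ u_R(a_0, θ) − u_R(a_N, θ) is strictly decreasing. (The key single-crossing step in the proof that empathy stabilizes ≻-interval candidate equilibria.) -/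
open Finset

/-! Suppose `d θ = u_R(a0, θ) - u_R(aN, θ)` were strictly increasing. Then the `ν0`-mean of `d` is
at most `d θ*`, which is at most the `νN`-mean of `d`. Optimality makes the first mean nonnegative
and the second nonpositive, so both inequalities are equalities, and strict monotonicity leaves no
mass away from `θ*`. -/

theorem eq_ite_of_sum_eq_one_of_forall_pos_imp_eq {ι R : Type*} [DecidableEq ι]
    [AddCommMonoid R] [One R] [PartialOrder R] {s : Finset ι} {w : ι → R} {t : ι}
    (hw₀ : ∀ i ∈ s, 0 ≤ w i) (hw₁ : ∑ i ∈ s, w i = 1) (hsupp : ∀ i ∈ s, 0 < w i → i = t) :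
    ∀ i ∈ s, w i = if i = t then 1 else 0 := by
  have hzero : ∀ i ∈ s, i ≠ t → w i = 0 := fun i hi hit =>
    ((hw₀ i hi).eq_of_not_lt fun hpos => hit (hsupp i hi hpos)).symm
  intro i hi
  split_ifs with hit
  · rw [← hw₁, sum_eq_single_of_mem i hi fun j hj hji => hzero j hj (hit ▸ hji)]
  · exact hzero i hi hit

theorem smul_le_smul_of_nonneg_of_pos_imp_le {R E : Type*} [Zero R] [PartialOrder R]
    [Zero E] [Preorder E] [SMulWithZero R E] [PosSMulMono R E] {r : R} {x y : E}
    (hr : 0 ≤ r) (hxy : 0 < r → x ≤ y) : r • x ≤ r • y := by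
  obtain rfl | hpos := hr.eq_or_lt
  · simp only [zero_smul, le_refl]
  · exact smul_le_smul_of_nonneg_left (hxy hpos) hr

section WeightedMean

variable {ι R E : Type*} [Semiring R] [PartialOrder R]
  [AddCommMonoid E] [PartialOrder E] [Module R E]
  {s : Finset ι} {w : ι → R} {f : ι → E} {c : E}

theorem sum_smul_le_of_forall_pos_imp_le [IsOrderedAddMonoid E] [PosSMulMono R E]
    (hw₀ : ∀ i ∈ s, 0 ≤ w i) (hw₁ : ∑ i ∈ s, w i = 1) (hle : ∀ i ∈ s, 0 < w i → f i ≤ c) :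
    ∑ i ∈ s, w i • f i ≤ c :=
  calc ∑ i ∈ s, w i • f i ≤ ∑ i ∈ s, w i • c :=
        sum_le_sum fun i hi => smul_le_smul_of_nonneg_of_pos_imp_le (hw₀ i hi) (hle i hi)
    _ = c := by rw [← sum_smul, hw₁, one_smul]

theorem eq_of_sum_smul_eq_of_forall_pos_imp_le [IsOrderedCancelAddMonoid E]
    [PosSMulStrictMono R E] (hw₀ : ∀ i ∈ s, 0 ≤ w i) (hw₁ : ∑ i ∈ s, w i = 1)
    (hle : ∀ i ∈ s, 0 < w i → f i ≤ c) (hmean : ∑ i ∈ s, w i • f i = c) :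
    ∀ i ∈ s, 0 < w i → f i = c := by
  have hterm : ∀ i ∈ s, w i • f i = w i • c := by
    refine (sum_eq_sum_iff_of_le fun i hi =>
      smul_le_smul_of_nonneg_of_pos_imp_le (hw₀ i hi) (hle i hi)).mp ?_
    rw [hmean, ← sum_smul, hw₁, one_smul]
  intro i hi hpos
  exact (hle i hi hpos).eq_of_not_lt fun hlt =>
    (smul_lt_smul_of_pos_left hlt hpos).ne (hterm i hi)

end WeightedMean

section StrictMono

variable {Θ R E : Type*} [PartialOrder Θ] [DecidableEq Θ] [Semiring R] [PartialOrder R]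
  {s : Finset Θ} {t : Θ}

theorem eq_ite_of_strictMono_of_sum_smul_eq [AddCommMonoid E] [PartialOrder E]
    [IsOrderedCancelAddMonoid E] [Module R E] [PosSMulStrictMono R E] {w : Θ → R} {f : Θ → E}
    (hf : StrictMono f) (hw₀ : ∀ θ ∈ s, 0 ≤ w θ) (hw₁ : ∑ θ ∈ s, w θ = 1)
    (hsupp : ∀ θ ∈ s, 0 < w θ → θ ≤ t) (hmean : ∑ θ ∈ s, w θ • f θ = f t) :
    ∀ θ ∈ s, w θ = if θ = t then 1 else 0 := by
  have hvalue : ∀ θ ∈ s, 0 < w θ → f θ = f t :=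
    eq_of_sum_smul_eq_of_forall_pos_imp_le hw₀ hw₁
      (fun θ hθ hpos => hf.monotone (hsupp θ hθ hpos)) hmean
  exact eq_ite_of_sum_eq_one_of_forall_pos_imp_eq hw₀ hw₁ fun θ hθ hpos =>
    (hsupp θ hθ hpos).eq_of_not_lt fun hlt => (hf hlt).ne (hvalue θ hθ hpos)

theorem eq_ite_and_eq_ite_of_strictMono_of_sum_smul_le [AddCommMonoid E] [PartialOrder E]
    [IsOrderedCancelAddMonoid E] [Module R E] [PosSMulStrictMono R E] {ν₀ νN : Θ → R} {f : Θ → E}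
    (hf : StrictMono f)
    (hν₀nn : ∀ θ ∈ s, 0 ≤ ν₀ θ) (hν₀sum : ∑ θ ∈ s, ν₀ θ = 1)
    (hνNnn : ∀ θ ∈ s, 0 ≤ νN θ) (hνNsum : ∑ θ ∈ s, νN θ = 1)
    (hν₀supp : ∀ θ ∈ s, 0 < ν₀ θ → θ ≤ t) (hνNsupp : ∀ θ ∈ s, 0 < νN θ → t ≤ θ)
    (hmean : ∑ θ ∈ s, νN θ • f θ ≤ ∑ θ ∈ s, ν₀ θ • f θ) :
    (∀ θ ∈ s, ν₀ θ = if θ = t then 1 else 0) ∧ (∀ θ ∈ s, νN θ = if θ = t then 1 else 0) := by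
  have hmean₀ : ∑ θ ∈ s, ν₀ θ • f θ ≤ f t :=
    sum_smul_le_of_forall_pos_imp_le hν₀nn hν₀sum fun θ hθ hpos =>
      hf.monotone (hν₀supp θ hθ hpos)
  have hmeanN : f t ≤ ∑ θ ∈ s, νN θ • f θ :=
    sum_smul_le_of_forall_pos_imp_le (E := Eᵒᵈ) hνNnn hνNsum fun θ hθ hpos =>
      hf.monotone (hνNsupp θ hθ hpos)
  exact ⟨eq_ite_of_strictMono_of_sum_smul_eq hf hν₀nn hν₀sum hν₀supp
      (hmean₀.antisymm (hmeanN.trans hmean)),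
    eq_ite_of_strictMono_of_sum_smul_eq (Θ := Θᵒᵈ) (E := Eᵒᵈ) hf.dual hνNnn hνNsum hνNsupp
      ((hmean.trans hmean₀).antisymm hmeanN)⟩

theorem single_crossing_best_response_strictAnti_general [AddCommGroup E] [PartialOrder E]
    [IsOrderedAddMonoid E] [Module R E] [PosSMulStrictMono R E] {ν₀ νN : Θ → R} {u₀ uN : Θ → E}
    (hsc : StrictMono (fun θ => u₀ θ - uN θ) ∨ StrictAnti (fun θ => u₀ θ - uN θ))
    (hν₀nn : ∀ θ ∈ s, 0 ≤ ν₀ θ) (hν₀sum : ∑ θ ∈ s, ν₀ θ = 1)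
    (hνNnn : ∀ θ ∈ s, 0 ≤ νN θ) (hνNsum : ∑ θ ∈ s, νN θ = 1)
    (hν₀supp : ∀ θ ∈ s, 0 < ν₀ θ → θ ≤ t) (hνNsupp : ∀ θ ∈ s, 0 < νN θ → t ≤ θ)
    (hnotboth : ¬ ((∀ θ ∈ s, ν₀ θ = if θ = t then 1 else 0) ∧
                   (∀ θ ∈ s, νN θ = if θ = t then 1 else 0)))
    (hu₀ : ∑ θ ∈ s, ν₀ θ • uN θ ≤ ∑ θ ∈ s, ν₀ θ • u₀ θ)
    (huN : ∑ θ ∈ s, νN θ • u₀ θ ≤ ∑ θ ∈ s, νN θ • uN θ) :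
    StrictAnti (fun θ => u₀ θ - uN θ) := by
  refine hsc.resolve_left fun hmono => hnotboth ?_
  have hmean₀ : 0 ≤ ∑ θ ∈ s, ν₀ θ • (u₀ θ - uN θ) := by
    simpa only [smul_sub, sum_sub_distrib, sub_nonneg] using hu₀
  have hmeanN : ∑ θ ∈ s, νN θ • (u₀ θ - uN θ) ≤ 0 := by
    simpa only [smul_sub, sum_sub_distrib, sub_nonpos] using huN
  exact eq_ite_and_eq_ite_of_strictMono_of_sum_smul_le hmono hν₀nn hν₀sum hνNnn hνNsum
    hν₀supp hνNsupp (hmeanN.trans hmean₀)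

end StrictMono

/-- The key single-crossing step in the proof that empathy stabilizes interval candidate
equilibria: if the receiver utility is single crossing, `ν0` is supported below `θ*`,
`νN` is supported above `θ*`, they are not both the point mass at `θ*`, and `a0 ≠ aN`
are respective best responses, then `θ ↦ u_R(a0, θ) − u_R(aN, θ)` is strictly
decreasing. -/
theorem single_crossing_best_response_strictAnti {Θ A : Type*}
    [Fintype Θ] [LinearOrder Θ] [Fintype A]
    (uR : A × Θ → ℝ)
    (hsc : ∀ a a' : A, a ≠ a' →
      StrictMono (fun θ => uR (a, θ) - uR (a', θ)) ∨
      StrictAnti (fun θ => uR (a, θ) - uR (a', θ)))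
    (θstar : Θ) (ν0 νN : Θ → ℝ)
    (hν0nn : ∀ θ, 0 ≤ ν0 θ) (hν0sum : ∑ θ, ν0 θ = 1)
    (hνNnn : ∀ θ, 0 ≤ νN θ) (hνNsum : ∑ θ, νN θ = 1)
    (hν0supp : ∀ θ, 0 < ν0 θ → θ ≤ θstar)
    (hνNsupp : ∀ θ, 0 < νN θ → θstar ≤ θ)
    (hnotboth : ¬ ((∀ θ, ν0 θ = if θ = θstar then 1 else 0) ∧
                   (∀ θ, νN θ = if θ = θstar then 1 else 0)))
    (a0 aN : A) (hne : a0 ≠ aN)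
    (ha0 : ∀ a : A, ∑ θ, ν0 θ * uR (a, θ) ≤ ∑ θ, ν0 θ * uR (a0, θ))
    (haN : ∀ a : A, ∑ θ, νN θ * uR (a, θ) ≤ ∑ θ, νN θ * uR (aN, θ)) :
    StrictAnti (fun θ => uR (a0, θ) - uR (aN, θ)) :=
  single_crossing_best_response_strictAnti_general (s := univ) (hsc a0 aN hne)
    (fun θ _ => hν0nn θ) hν0sum (fun θ _ => hνNnn θ) hνNsum (fun θ _ => hν0supp θ)
    (fun θ _ => hνNsupp θ) (by simpa only [mem_univ, true_imp_iff] using hnotboth) (ha0 aN) (haN a0)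
end

section
/- Let A be a finite set, M a type, Θ a finite set, u^0 : A × M → ℝ, u_R : A × Θ → ℝ, and ε > 0. For probability distributions p_0, p_1 on A, messages m_0, m_1 ∈ M and states θ_0, θ_1 ∈ Θ, write U_S(p, m, θ) := ∑_a p(a)·( u^0(a, m) − ε·u_R(a, θ) ) and Ū_R(p, θ) := ∑_a p(a)·u_R(a, θ). If Ū_R(p_0, θ_0) > Ū_R(p_1, θ_0) and Ū_R(p_1, θ_1) ≥ Ū_R(p_0, θ_1), then it is not the case that both U_S(p_0, m_0, θ_0) ≥ U_S(p_1, m_1, θ_0) and U_S(p_1, m_1, θ_1) ≥ U_S(p_0, m_0, θ_1) hold. (The incentive-compatibility contradiction at the core of the proof that a slightly antipathetic sender — utility u^0 − ε·u_R — admits no persuasive equilibrium.) -/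
open Finset

/-!
Adding the two incentive constraints cancels the message-dependent payoffs: they would have to
satisfy `ε (r₀(θ₀) + r₁(θ₁)) ≤ ε (r₁(θ₀) + r₀(θ₁))`, where `rᵢ(θ)` is the receiver's expected
utility from `pᵢ` in state `θ`. The receiver's two preferences add up to the opposite strict
inequality.
-/

theorem sum_mul_sub_const_mul {ι R : Type*} [NonUnitalCommRing R] (s : Finset ι)
    (w f g : ι → R) (c : R) :
    ∑ i ∈ s, w i * (f i - c * g i) = ∑ i ∈ s, w i * f i - c * ∑ i ∈ s, w i * g i := by
  simp only [mul_sub, sum_sub_distrib, mul_sum, mul_left_comm c]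

theorem add_le_add_of_sub_le_sub_of_sub_le_sub {G : Type*} [AddCommGroup G] [PartialOrder G]
    [IsOrderedAddMonoid G] {c₀ c₁ r₀ r₁ s₀ s₁ : G}
    (h₀ : c₁ - s₀ ≤ c₀ - r₀) (h₁ : c₀ - s₁ ≤ c₁ - r₁) : r₀ + r₁ ≤ s₀ + s₁ := by
  rw [sub_le_sub_iff] at h₀ h₁
  refine le_of_add_le_add_left (a := c₁ + c₀) ?_
  calc c₁ + c₀ + (r₀ + r₁) = (c₁ + r₀) + (c₀ + r₁) := add_add_add_comm ..
    _ ≤ (c₀ + s₀) + (c₁ + s₁) := add_le_add h₀ h₁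
    _ = c₁ + c₀ + (s₀ + s₁) := by rw [add_add_add_comm, add_comm c₀]

theorem antipathy_ic_contradiction_general {A M Θ R : Type*} [Fintype A]
    [CommRing R] [PartialOrder R] [IsStrictOrderedRing R]
    (u0 : A × M → R) (uR : A × Θ → R) {ε : R} (hε : 0 < ε)
    (p0 p1 : A → R) (m0 m1 : M) (θ0 θ1 : Θ)
    (hR0 : ∑ a, p1 a * uR (a, θ0) < ∑ a, p0 a * uR (a, θ0))
    (hR1 : ∑ a, p0 a * uR (a, θ1) ≤ ∑ a, p1 a * uR (a, θ1)) :
    ¬ ((∑ a, p1 a * (u0 (a, m1) - ε * uR (a, θ0)) ≤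
          ∑ a, p0 a * (u0 (a, m0) - ε * uR (a, θ0))) ∧
       (∑ a, p0 a * (u0 (a, m0) - ε * uR (a, θ1)) ≤
          ∑ a, p1 a * (u0 (a, m1) - ε * uR (a, θ1)))) := by
  simp only [sum_mul_sub_const_mul]
  rintro ⟨ic0, ic1⟩
  have sender_le :
      ε * (∑ a, p0 a * uR (a, θ0) + ∑ a, p1 a * uR (a, θ1)) ≤
        ε * (∑ a, p1 a * uR (a, θ0) + ∑ a, p0 a * uR (a, θ1)) := by
    simpa only [mul_add] using add_le_add_of_sub_le_sub_of_sub_le_sub ic0 ic1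
  have receiver_lt :
      ∑ a, p1 a * uR (a, θ0) + ∑ a, p0 a * uR (a, θ1) <
        ∑ a, p0 a * uR (a, θ0) + ∑ a, p1 a * uR (a, θ1) :=
    add_lt_add_of_lt_of_le hR0 hR1
  exact (mul_lt_mul_of_pos_left receiver_lt hε).not_ge sender_le

/-- The incentive-compatibility contradiction at the core of the proof that a slightly
antipathetic sender (utility `u⁰ − ε·u_R`) admits no persuasive equilibrium: if the
receiver strictly prefers `p0` to `p1` in state `θ0` and weakly prefers `p1` to `p0` in
state `θ1`, then the two sender incentive-compatibility inequalities cannot both hold. -/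
theorem antipathy_ic_contradiction {A M Θ : Type*} [Fintype A]
    (u0 : A × M → ℝ) (uR : A × Θ → ℝ) (ε : ℝ) (hε : 0 < ε)
    (p0 p1 : A → ℝ)
    (hp0nn : ∀ a, 0 ≤ p0 a) (hp0sum : ∑ a, p0 a = 1)
    (hp1nn : ∀ a, 0 ≤ p1 a) (hp1sum : ∑ a, p1 a = 1)
    (m0 m1 : M) (θ0 θ1 : Θ)
    (hR0 : ∑ a, p1 a * uR (a, θ0) < ∑ a, p0 a * uR (a, θ0))
    (hR1 : ∑ a, p0 a * uR (a, θ1) ≤ ∑ a, p1 a * uR (a, θ1)) :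
    ¬ ((∑ a, p1 a * (u0 (a, m1) - ε * uR (a, θ0)) ≤
          ∑ a, p0 a * (u0 (a, m0) - ε * uR (a, θ0))) ∧
       (∑ a, p0 a * (u0 (a, m0) - ε * uR (a, θ1)) ≤
          ∑ a, p1 a * (u0 (a, m1) - ε * uR (a, θ1)))) :=
  antipathy_ic_contradiction_general u0 uR hε p0 p1 m0 m1 θ0 θ1 hR0 hR1
end

section
/- Consider a finite sender–receiver cheap-talk/signalling game: a finite state set Θ, a finite action set A, a message set M, a prior μ given by a probability distribution on Θ, a receiver utility u_R : A × Θ → ℝ, a transparent sender payoff u^0 : A × M → ℝ, and ε > 0; the sender's utility from the receiver's mixed action p (a probability distribution on A) after message m in state θ is U_S(p, m, θ) := ∑_a p(a)·( u^0(a, m) − ε·u_R(a, θ) ). Then in every perfect Bayesian equilibrium of this game, for every on-path message m and every action a in the support of the receiver's response r(m), a maximizes a' ↦ ∑_θ μ(θ)·u_R(a', θ) over A; that is, no perfect Bayesian equilibrium is persuasive. (Proposition: with sender preference u^0 − ε·u_R for transparent u^0 and ε > 0, there is no persuasive equilibrium.) -/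
open Finset

/-!
Give a message `m` the weights `w m θ = μ θ * σ θ m`, its unnormalised posterior, and compare two
on-path messages `m` and `m'` among the states that send `m'`. The response to `m'` is optimal for
the receiver against `w m'`, so deviating to `m` can only hurt the receiver on average, which the
sender likes. Since senders of `m'` nevertheless do not deviate, the transparent payoff of `m` is at
most that of `m'`, and by symmetry all on-path messages have the same transparent payoff. Sender
optimality then forces every on-path response to be optimal against every `w m'`, hence against
their sum, the prior.
-/

open Matrix

section

variable {𝕜 Θ A M : Type*}

section Ring

variable [CommRing 𝕜]

theorem sum_mul_sub_mul_eq_dotProduct_sub_mulVec [Fintype A] (p f : A → 𝕜)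
    (u : Matrix Θ A 𝕜) (ε : 𝕜) (θ : Θ) :
    ∑ a, p a * (f a - ε * u θ a) = p ⬝ᵥ f - ε * (u *ᵥ p) θ := by
  simp only [dotProduct, mulVec, mul_sub, sum_sub_distrib, mul_sum, mul_left_comm,
    mul_comm (p _) (u _ _)]

theorem dotProduct_const_sub_mul [Fintype Θ] (w f : Θ → 𝕜) (c ε : 𝕜) :
    w ⬝ᵥ (fun θ ↦ c - ε * f θ) = (∑ θ, w θ) * c - ε * (w ⬝ᵥ f) := by
  simp only [dotProduct, mul_sub, sum_sub_distrib, sum_mul, mul_sum, mul_left_comm]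

end Ring

theorem dotProduct_const_of_mem_stdSimplex [Semiring 𝕜] [PartialOrder 𝕜] [Fintype A] {p : A → 𝕜}
    (hp : p ∈ stdSimplex 𝕜 A) (c : 𝕜) : p ⬝ᵥ (fun _ ↦ c) = c := by
  simp only [dotProduct, ← sum_mul, hp.2, one_mul]

/-- The mixed action `p` is a best reply when pure actions yield the payoffs `f`: only maximizers
of `f` are played with positive probability. That `p` is a probability vector is not part of the
definition. -/
def IsBestReply [Zero 𝕜] [Preorder 𝕜] (p f : A → 𝕜) : Prop :=
  ∀ a, 0 < p a → ∀ a', f a' ≤ f a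

theorem IsBestReply.zero [Zero 𝕜] [Preorder 𝕜] (p : A → 𝕜) : IsBestReply p 0 :=
  fun _ _ _ ↦ le_rfl

section OrderedSemiring

variable [Semiring 𝕜] [PartialOrder 𝕜] [IsOrderedRing 𝕜]

namespace IsBestReply

theorem smul {p f : A → 𝕜} (h : IsBestReply p f) {c : 𝕜} (hc : 0 ≤ c) : IsBestReply p (c • f) :=
  fun a ha a' ↦ mul_le_mul_of_nonneg_left (h a ha a') hc

theorem sum {ι : Type*} {s : Finset ι} {p : A → 𝕜} {f : ι → A → 𝕜}
    (h : ∀ i ∈ s, IsBestReply p (f i)) : IsBestReply p (∑ i ∈ s, f i) := by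
  intro a ha a'
  simp only [Finset.sum_apply]
  exact sum_le_sum fun i hi ↦ h i hi a ha a'

end IsBestReply

theorem dotProduct_le_dotProduct_of_forall_pos [Fintype Θ] {w f g : Θ → 𝕜} (hw : 0 ≤ w)
    (h : ∀ θ, 0 < w θ → f θ ≤ g θ) : w ⬝ᵥ f ≤ w ⬝ᵥ g := by
  refine sum_le_sum fun θ _ ↦ ?_
  rcases (hw θ).eq_or_lt with hθ | hθ
  · simp [← hθ]
  · exact mul_le_mul_of_nonneg_left (h θ hθ) hθ.le

variable [Fintype A] {p q f : A → 𝕜}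

theorem IsBestReply.le_dotProduct (hp : p ∈ stdSimplex 𝕜 A) (h : IsBestReply p f) (a : A) :
    f a ≤ p ⬝ᵥ f :=
  calc
    f a = p ⬝ᵥ (fun _ ↦ f a) := (dotProduct_const_of_mem_stdSimplex hp _).symm
    _ ≤ p ⬝ᵥ f := dotProduct_le_dotProduct_of_forall_pos hp.1 fun b hb ↦ h b hb a

theorem IsBestReply.dotProduct_le (hp : p ∈ stdSimplex 𝕜 A) (h : IsBestReply p f)
    (hq : q ∈ stdSimplex 𝕜 A) : q ⬝ᵥ f ≤ p ⬝ᵥ f :=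
  calc
    q ⬝ᵥ f ≤ q ⬝ᵥ (fun _ ↦ p ⬝ᵥ f) :=
      dotProduct_le_dotProduct_of_forall_pos hq.1 fun a _ ↦ h.le_dotProduct hp a
    _ = p ⬝ᵥ f := dotProduct_const_of_mem_stdSimplex hq _

end OrderedSemiring

section JointWeight

/-- The probability that the state is `θ` and the message is `m`, under the prior `μ` and the sender
strategy `σ`. As a function of `θ` it is the posterior after `m`, left unnormalised so that it makes
sense off path; the probability `(μ ᵥ* σ) m` of `m` is its sum over `θ`. -/
def jointWeight [Mul 𝕜] (μ : Θ → 𝕜) (σ : Matrix Θ M 𝕜) (m : M) (θ : Θ) : 𝕜 :=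
  μ θ * σ θ m

variable {μ : Θ → 𝕜} {σ : Matrix Θ M 𝕜}

theorem sum_jointWeight [Semiring 𝕜] [Fintype M] (hσ : ∀ θ, ∑ m, σ θ m = 1) :
    ∑ m, jointWeight μ σ m = μ := by
  ext θ
  simp only [Finset.sum_apply, jointWeight, ← mul_sum, hσ, mul_one]

theorem jointWeight_nonneg [Semiring 𝕜] [PartialOrder 𝕜] [IsOrderedRing 𝕜] (hμ : 0 ≤ μ)
    (hσ : ∀ θ m, 0 ≤ σ θ m) (m : M) : 0 ≤ jointWeight μ σ m :=
  fun θ ↦ mul_nonneg (hμ θ) (hσ θ m)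

theorem jointWeight_eq_zero [Semiring 𝕜] [PartialOrder 𝕜] [IsOrderedRing 𝕜] [Fintype Θ]
    (hμ : 0 ≤ μ) (hσ : ∀ θ m, 0 ≤ σ θ m) {m : M} (hm : (μ ᵥ* σ) m ≤ 0) :
    jointWeight μ σ m = 0 :=
  (Fintype.sum_eq_zero_iff_of_nonneg (jointWeight_nonneg hμ hσ m)).1 <|
    hm.antisymm (sum_nonneg fun θ _ ↦ jointWeight_nonneg hμ hσ m θ)

theorem jointWeight_pos_iff [Semiring 𝕜] [LinearOrder 𝕜] [IsStrictOrderedRing 𝕜] (hμ : 0 ≤ μ)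
    (hσ : ∀ θ m, 0 ≤ σ θ m) {m : M} {θ : Θ} :
    0 < jointWeight μ σ m θ ↔ 0 < μ θ ∧ 0 < σ θ m := by
  constructor
  · exact fun h ↦ ⟨pos_of_mul_pos_left h (hσ θ m), pos_of_mul_pos_right h (hμ θ)⟩
  · exact fun h ↦ mul_pos h.1 h.2

theorem IsBestReply.jointWeight_of_bayes [Field 𝕜] [LinearOrder 𝕜] [IsStrictOrderedRing 𝕜]
    [Fintype Θ] {ν : Θ → 𝕜} {u : Matrix Θ A 𝕜} {p : A → 𝕜} {m : M} (hm : 0 < (μ ᵥ* σ) m)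
    (hbayes : ∀ θ, ν θ = jointWeight μ σ m θ / (μ ᵥ* σ) m) (h : IsBestReply p (ν ᵥ* u)) :
    IsBestReply p (jointWeight μ σ m ᵥ* u) := by
  have joint_eq : jointWeight μ σ m = (μ ᵥ* σ) m • ν := by
    ext θ
    rw [Pi.smul_apply, smul_eq_mul, hbayes, mul_div_cancel₀ _ hm.ne']
  rw [joint_eq, smul_vecMul]
  exact h.smul hm.le

end JointWeight

variable [CommRing 𝕜] [LinearOrder 𝕜] [IsStrictOrderedRing 𝕜]

section BestReply

variable [Fintype A] {p q f : A → 𝕜}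

theorem isBestReply_of_forall_le_dotProduct (hp : p ∈ stdSimplex 𝕜 A) (h : ∀ a, f a ≤ p ⬝ᵥ f) :
    IsBestReply p f := by
  -- Complementary slackness: the nonnegative losses `p ⬝ᵥ f - f a` have `p`-average zero.
  have loss_nonneg (a : A) : 0 ≤ p a * (p ⬝ᵥ f - f a) := mul_nonneg (hp.1 a) (sub_nonneg.2 (h a))
  have sum_loss : ∑ a, p a * (p ⬝ᵥ f - f a) = 0 := by
    simp only [mul_sub, sum_sub_distrib, ← sum_mul, hp.2, one_mul]
    exact sub_self _
  intro a ha a'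
  have loss_eq_zero : p a * (p ⬝ᵥ f - f a) = 0 :=
    (sum_eq_zero_iff_of_nonneg fun b _ ↦ loss_nonneg b).1 sum_loss a (mem_univ a)
  have value_eq : p ⬝ᵥ f = f a := sub_eq_zero.1 ((mul_eq_zero_iff_left ha.ne').1 loss_eq_zero)
  exact value_eq ▸ h a'

theorem IsBestReply.of_dotProduct_le (hp : p ∈ stdSimplex 𝕜 A) (h : IsBestReply p f)
    (hq : q ∈ stdSimplex 𝕜 A) (hpq : p ⬝ᵥ f ≤ q ⬝ᵥ f) : IsBestReply q f :=
  isBestReply_of_forall_le_dotProduct hq fun a ↦ (h.le_dotProduct hp a).trans hpq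

end BestReply

section Deviation

-- The message sent with weights `w` is answered by `p`, a deviation by `q`; the transparent payoffs
-- of the two answers are `vp` and `vq`.
variable [Fintype Θ] [Fintype A] {u : Matrix Θ A 𝕜} {w : Θ → 𝕜} {p q : A → 𝕜} {ε vp vq : 𝕜}

theorem sum_mul_sub_le_of_forall_pos (hw : 0 ≤ w)
    (hdev : ∀ θ, 0 < w θ → vq - ε * (u *ᵥ q) θ ≤ vp - ε * (u *ᵥ p) θ) :
    (∑ θ, w θ) * vq - ε * (q ⬝ᵥ w ᵥ* u) ≤ (∑ θ, w θ) * vp - ε * (p ⬝ᵥ w ᵥ* u) := by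
  simpa only [dotProduct_const_sub_mul, dotProduct_mulVec, dotProduct_comm (w ᵥ* u)] using
    dotProduct_le_dotProduct_of_forall_pos hw hdev

theorem IsBestReply.transparentPayoff_le (hp : p ∈ stdSimplex 𝕜 A) (h : IsBestReply p (w ᵥ* u))
    (hq : q ∈ stdSimplex 𝕜 A) (hε : 0 ≤ ε) (hw : 0 ≤ w) (hw_pos : 0 < ∑ θ, w θ)
    (hdev : ∀ θ, 0 < w θ → vq - ε * (u *ᵥ q) θ ≤ vp - ε * (u *ᵥ p) θ) : vq ≤ vp := by
  have sender := sum_mul_sub_le_of_forall_pos hw hdev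
  have receiver := mul_le_mul_of_nonneg_left (h.dotProduct_le hp hq) hε
  exact le_of_mul_le_mul_left (by linarith) hw_pos

theorem IsBestReply.of_transparentPayoff_le (hp : p ∈ stdSimplex 𝕜 A) (h : IsBestReply p (w ᵥ* u))
    (hq : q ∈ stdSimplex 𝕜 A) (hε : 0 < ε) (hw : 0 ≤ w) (hv : vp ≤ vq)
    (hdev : ∀ θ, 0 < w θ → vq - ε * (u *ᵥ q) θ ≤ vp - ε * (u *ᵥ p) θ) :
    IsBestReply q (w ᵥ* u) := by
  have sender := sum_mul_sub_le_of_forall_pos hw hdev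
  have transparent := mul_le_mul_of_nonneg_left hv (Fintype.sum_nonneg hw)
  exact h.of_dotProduct_le hp hq (le_of_mul_le_mul_left (by linarith) hε)

end Deviation

/-- Optimality is imposed on path only, so this is about Nash equilibria; `v m p` is the transparent
payoff from the mixed action `p`, an arbitrary function of `p`. -/
theorem antipathy_no_persuasive_equilibrium_general [Fintype Θ] [Fintype A] [Fintype M]
    {μ : Θ → 𝕜} (hμ : 0 ≤ μ) {u : Matrix Θ A 𝕜} {v : M → (A → 𝕜) → 𝕜} {ε : 𝕜} (hε : 0 < ε)
    {σ : Matrix Θ M 𝕜} (hσ : ∀ θ, σ θ ∈ stdSimplex 𝕜 M)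
    {r : M → A → 𝕜} (hr : ∀ m, r m ∈ stdSimplex 𝕜 A)
    (hsender : ∀ θ, 0 < μ θ → ∀ m, 0 < σ θ m → ∀ m', 0 < (μ ᵥ* σ) m' →
      v m' (r m') - ε * (u *ᵥ r m') θ ≤ v m (r m) - ε * (u *ᵥ r m) θ)
    (hreceiver : ∀ m, 0 < (μ ᵥ* σ) m → IsBestReply (r m) (jointWeight μ σ m ᵥ* u)) :
    ∀ m, 0 < (μ ᵥ* σ) m → IsBestReply (r m) (μ ᵥ* u) := by
  have hσ₀ (θ : Θ) (m : M) : 0 ≤ σ θ m := (hσ θ).1 m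
  have hw := jointWeight_nonneg hμ hσ₀
  have hdev {m m' : M} (hm : 0 < (μ ᵥ* σ) m) (θ : Θ) (hθ : 0 < jointWeight μ σ m' θ) :
      v m (r m) - ε * (u *ᵥ r m) θ ≤ v m' (r m') - ε * (u *ᵥ r m') θ :=
    have ⟨hμθ, hσθ⟩ := (jointWeight_pos_iff hμ hσ₀).1 hθ
    hsender θ hμθ m' hσθ m hm
  have transparentPayoff_le {m m' : M} (hm : 0 < (μ ᵥ* σ) m) (hm' : 0 < (μ ᵥ* σ) m') :
      v m (r m) ≤ v m' (r m') :=
    (hreceiver m' hm').transparentPayoff_le (hr m') (hr m) hε.le (hw m') hm' (hdev hm)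
  intro m hm
  have best_against (m' : M) : IsBestReply (r m) (jointWeight μ σ m' ᵥ* u) := by
    rcases lt_or_ge 0 ((μ ᵥ* σ) m') with hm' | hm'
    · exact (hreceiver m' hm').of_transparentPayoff_le (hr m') (hr m) hε (hw m')
        (transparentPayoff_le hm' hm) (hdev hm)
    · rw [jointWeight_eq_zero hμ hσ₀ hm', zero_vecMul]
      exact .zero _
  rw [← sum_jointWeight (μ := μ) fun θ ↦ (hσ θ).2, sum_vecMul]
  exact .sum fun _ _ ↦ best_against _

end

/-- With sender preference `u⁰ − ε·u_R` (transparent `u⁰`, `ε > 0`), no perfect Bayesian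
equilibrium is persuasive: in every PBE, every action in the support of the receiver's
response to an on-path message is a best response to the prior. -/
theorem antipathy_no_persuasive_equilibrium {Θ A M : Type*}
    [Fintype Θ] [Fintype A] [Fintype M]
    (μ : Θ → ℝ) (hμnn : ∀ θ, 0 ≤ μ θ) (hμsum : ∑ θ, μ θ = 1)
    (uR : A × Θ → ℝ) (u0 : A × M → ℝ) (ε : ℝ) (hε : 0 < ε)
    -- sender strategy
    (σ : Θ → M → ℝ) (hσnn : ∀ θ m, 0 ≤ σ θ m) (hσsum : ∀ θ, ∑ m, σ θ m = 1)
    -- receiver beliefs and strategy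
    (ν : M → Θ → ℝ) (hνnn : ∀ m θ, 0 ≤ ν m θ) (hνsum : ∀ m, ∑ θ, ν m θ = 1)
    (r : M → A → ℝ) (hrnn : ∀ m a, 0 ≤ r m a) (hrsum : ∀ m, ∑ a, r m a = 1)
    -- (i) sender optimality
    (hsender : ∀ θ, 0 < μ θ → ∀ m, 0 < σ θ m → ∀ m' : M,
      ∑ a, r m' a * (u0 (a, m') - ε * uR (a, θ)) ≤
        ∑ a, r m a * (u0 (a, m) - ε * uR (a, θ)))
    -- (ii) Bayes' rule on path
    (hbayes : ∀ m, 0 < ∑ θ, μ θ * σ θ m → ∀ θ,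
      ν m θ = μ θ * σ θ m / ∑ θ', μ θ' * σ θ' m)
    -- (iii) receiver optimality
    (hreceiver : ∀ m : M, ∀ a, 0 < r m a → ∀ a' : A,
      ∑ θ, ν m θ * uR (a', θ) ≤ ∑ θ, ν m θ * uR (a, θ)) :
    -- conclusion: no persuasion
    ∀ m, 0 < ∑ θ, μ θ * σ θ m → ∀ a, 0 < r m a → ∀ a' : A,
      ∑ θ, μ θ * uR (a', θ) ≤ ∑ θ, μ θ * uR (a, θ) :=
  antipathy_no_persuasive_equilibrium_general (u := .of fun θ a ↦ uR (a, θ))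
    (v := fun m p ↦ p ⬝ᵥ fun a ↦ u0 (a, m)) hμnn hε
    (fun θ ↦ ⟨hσnn θ, hσsum θ⟩) (fun m ↦ ⟨hrnn m, hrsum m⟩)
    (fun θ hθ m hm m' _ ↦ by
      simpa only [← sum_mul_sub_mul_eq_dotProduct_sub_mulVec, of_apply] using hsender θ hθ m hm m')
    (fun m hm ↦ .jointWeight_of_bayes hm (hbayes m hm) (hreceiver m))
end

section
/- Let Θ be a finite state set with prior μ (a probability distribution on Θ), A a finite action set, M a finite message set, u_R : A × Θ → ℝ, and let (Ω₁, P₁), (Ω₂, P₂) be probability spaces with Ω := Ω₁ × Ω₂ carrying the product probability measure P := P₁ ⊗ P₂. Let ũ : A × M × Ω₁ → ℝ and U : A × Ω₂ → ℝ be measurable, and suppose the law under P₂ of the random vector ω₂ ↦ (U(a, ω₂))_{a ∈ A} is absolutely continuous with respect to Lebesgue measure on ℝ^A. Define the state-independent idiosyncratic sender utility u_S(a, m, ω) := ũ(a, m, ω₁) + U(a, ω₂), extended to mixed actions p by u_S(p, m, ω) := ∑_a p(a)·u_S(a, m, ω). Then in any equilibrium of this communication game, for every on-path message m and every action a in the support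 of the receiver's response r(m), a maximizes a' ↦ ∑_θ μ(θ)·u_R(a', θ) over A; that is, no equilibrium is persuasive. (Fragility Proposition, part (1), in the case of finitely many messages: no persuasive equilibrium exists if the sender's state-independent preference decomposes as ũ(a, m, ω₁) + U(a, ω₂) with U admitting a density over ℝ^A.) -/
open Finset MeasureTheory

/-!
Given `ω₁`, two messages answered by different mixed actions give the sender equal payoffs only if
the vector `(U a ω₂)_a` lies on a fixed affine hyperplane, a null event. Hence almost surely all
payoff-maximizing messages are answered by the same mixed action, so the receiver's response is the
same in every state and carries no information about it. Pooling the messages that share a given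
response, whose total probability does not depend on the state, averages the receiver's posterior
optimality conditions back to the prior.
-/

/-- A measure gives no mass to affine hyperplanes, encoded as the level sets of nonzero linear
functionals. This is the regularity of the law of the sender's payoff shocks that rules out ties. -/
def HyperplaneNull {E : Type*} [AddCommGroup E] [Module ℝ E] [MeasurableSpace E]
    (ρ : Measure E) : Prop :=
  ∀ L : Module.Dual ℝ E, L ≠ 0 → ∀ c : ℝ, ρ {x | L x = c} = 0

lemma HyperplaneNull.mono_ac {E : Type*} [AddCommGroup E] [Module ℝ E] [MeasurableSpace E]
    {ρ σ : Measure E} (hσ : HyperplaneNull σ) (hρσ : ρ ≪ σ) : HyperplaneNull ρ :=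
  fun L hL c => hρσ (hσ L hL c)

section FiniteDimensional

variable {E : Type*} [NormedAddCommGroup E] [NormedSpace ℝ E] [FiniteDimensional ℝ E]
  [MeasurableSpace E] [BorelSpace E]

lemma hyperplaneNull_of_isAddHaarMeasure (ρ : Measure E) [ρ.IsAddHaarMeasure] :
    HyperplaneNull ρ := by
  intro L hL c
  let s : AffineSubspace ℝ E := (AffineSubspace.mk' c ⊥).comap L.toAffineMap
  have mem_s (x : E) : x ∈ s ↔ L x = c := by
    simp [s, AffineSubspace.mem_comap, AffineSubspace.mem_mk', sub_eq_zero]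
  obtain ⟨x, hx⟩ := LinearMap.surjective hL (c + 1)
  have hs : s ≠ ⊤ := by
    intro htop
    have hxc : L x = c := (mem_s x).mp (htop ▸ AffineSubspace.mem_top ℝ E x)
    linarith
  rw [show {x | L x = c} = s from Set.ext fun x => (mem_s x).symm]
  exact Measure.addHaar_affineSubspace ρ s hs

lemma HyperplaneNull.ae_prod_apply_ne {Ω₁ Ω₂ : Type*} [MeasurableSpace Ω₁] [MeasurableSpace Ω₂]
    (P₁ : Measure Ω₁) {P₂ : Measure Ω₂} {X : Ω₂ → E} (hX : Measurable X)
    (hnull : HyperplaneNull (P₂.map X)) {L : Module.Dual ℝ E} (hL : L ≠ 0)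
    {c : Ω₁ → ℝ} (hc : Measurable c) :
    ∀ᵐ ω ∂(P₁.prod P₂), L (X ω.2) ≠ c ω.1 := by
  have hLX : Measurable fun ω : Ω₁ × Ω₂ => L (X ω.2) :=
    L.continuous_of_finiteDimensional.measurable.comp (hX.comp measurable_snd)
  have hmeas : MeasurableSet {ω : Ω₁ × Ω₂ | L (X ω.2) = c ω.1} :=
    measurableSet_eq_fun hLX (hc.comp measurable_fst)
  simp only [ae_iff, not_not]
  refine Measure.measure_prod_null_of_ae_null hmeas (Filter.Eventually.of_forall fun ω₁ => ?_)
  exact Measure.preimage_null_of_map_null hX.aemeasurable (hnull L hL (c ω₁))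

end FiniteDimensional

section Sender

variable {A M Ω₁ Ω₂ : Type*} [Fintype A]

/-- The sender's state-independent payoff `u_S(p, m, ω)` from message `m` when the receiver
answers with the mixed action `p`, for the utility `ũ(a, m, ω₁) + U(a, ω₂)`. -/
def senderPayoff (uTil : A → M → Ω₁ → ℝ) (U : A → Ω₂ → ℝ) (p : A → ℝ) (m : M)
    (ω : Ω₁ × Ω₂) : ℝ :=
  ∑ a, p a * (uTil a m ω.1 + U a ω.2)

lemma senderPayoff_eq_iff (uTil : A → M → Ω₁ → ℝ) (U : A → Ω₂ → ℝ) (p q : A → ℝ) (m n : M)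
    (ω : Ω₁ × Ω₂) :
    senderPayoff uTil U p m ω = senderPayoff uTil U q n ω ↔
      (p - q) ⬝ᵥ (fun a => U a ω.2) = ∑ a, q a * uTil a n ω.1 - ∑ a, p a * uTil a m ω.1 := by
  simp only [senderPayoff, dotProduct, Pi.sub_apply, mul_add, sub_mul, sum_add_distrib,
    sum_sub_distrib]
  constructor <;> intro h <;> linarith

variable [MeasurableSpace Ω₁] [MeasurableSpace Ω₂] (P₁ : Measure Ω₁) {P₂ : Measure Ω₂}
  {uTil : A → M → Ω₁ → ℝ} (huTil : ∀ a m, Measurable (uTil a m))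
  {U : A → Ω₂ → ℝ} (hU : ∀ a, Measurable (U a))
  (hnull : HyperplaneNull (P₂.map fun ω₂ a => U a ω₂))

include huTil hU hnull

lemma ae_senderPayoff_ne {p q : A → ℝ} (hpq : p ≠ q) (m n : M) :
    ∀ᵐ ω ∂(P₁.prod P₂), senderPayoff uTil U p m ω ≠ senderPayoff uTil U q n ω := by
  classical
  have hL : dotProductEquiv ℝ A (p - q) ≠ 0 :=
    (dotProductEquiv ℝ A).map_ne_zero_iff.mpr (sub_ne_zero.mpr hpq)
  have hsum (s : A → ℝ) (k : M) : Measurable fun ω₁ => ∑ a, s a * uTil a k ω₁ :=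
    Finset.measurable_sum _ fun a _ => (huTil a k).const_mul (s a)
  filter_upwards [hnull.ae_prod_apply_ne P₁ (measurable_pi_lambda _ hU) hL
    ((hsum q n).sub (hsum p m))] with ω hω
  exact mt (senderPayoff_eq_iff uTil U p q m n ω).mp hω

lemma ae_response_eq_of_maximizes [Countable M] {r : M → A → ℝ} {f g : Ω₁ × Ω₂ → M}
    (hf : ∀ᵐ ω ∂(P₁.prod P₂), ∀ m,
      senderPayoff uTil U (r m) m ω ≤ senderPayoff uTil U (r (f ω)) (f ω) ω)
    (hg : ∀ᵐ ω ∂(P₁.prod P₂), ∀ m,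
      senderPayoff uTil U (r m) m ω ≤ senderPayoff uTil U (r (g ω)) (g ω) ω) :
    ∀ᵐ ω ∂(P₁.prod P₂), r (f ω) = r (g ω) := by
  have no_ties : ∀ᵐ ω ∂(P₁.prod P₂), ∀ m n, r m ≠ r n →
      senderPayoff uTil U (r m) m ω ≠ senderPayoff uTil U (r n) n ω := by
    simp only [ae_all_iff, Filter.eventually_imp_distrib_left]
    exact fun m n hmn => ae_senderPayoff_ne P₁ huTil hU hnull hmn m n
  filter_upwards [no_ties, hf, hg] with ω hties hfω hgω
  by_contra hne
  exact hties _ _ hne (le_antisymm (hgω _) (hfω _))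

end Sender

lemma hasSum_measureReal_preimage_singleton {α β : Type*} [MeasurableSpace α] (P : Measure α)
    [IsFiniteMeasure P] {s : Set β} (hs : s.Countable) {f : α → β}
    (hf : ∀ y ∈ s, MeasurableSet (f ⁻¹' {y})) :
    HasSum (fun y : s => P.real (f ⁻¹' {(y : β)})) (P.real (f ⁻¹' s)) := by
  have htsum := tsum_measure_preimage_singleton (μ := P) hs hf
  rw [Measure.real, ← htsum, ENNReal.tsum_toReal_eq fun _ => measure_ne_top P _]
  exact (ENNReal.summable_toReal (htsum ▸ measure_ne_top P _)).hasSum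

section Receiver

variable {Θ : Type*} [Fintype Θ]

lemma sum_mul_le_sum_mul_of_normalized {w : Θ → ℝ} (hw : 0 ≤ w) {f g : Θ → ℝ}
    (h : 0 < ∑ θ, w θ → ∑ θ, w θ / (∑ θ', w θ') * f θ ≤ ∑ θ, w θ / (∑ θ', w θ') * g θ) :
    ∑ θ, w θ * f θ ≤ ∑ θ, w θ * g θ := by
  rcases (Fintype.sum_nonneg hw).eq_or_lt with hzero | hpos
  · have hw0 : w = 0 := (Fintype.sum_eq_zero_iff_of_nonneg hw).mp hzero.symm
    simp [hw0]
  · simpa only [div_mul_eq_mul_div, ← sum_div, div_le_div_iff_of_pos_right hpos] using h hpos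

lemma sum_mul_le_sum_mul_of_hasSum {ι : Type*} {μ f g : Θ → ℝ} {p : Θ → ι → ℝ} {q : ℝ}
    (hq : 0 < q) (hp : ∀ θ, HasSum (p θ) q)
    (h : ∀ i, ∑ θ, μ θ * p θ i * f θ ≤ ∑ θ, μ θ * p θ i * g θ) :
    ∑ θ, μ θ * f θ ≤ ∑ θ, μ θ * g θ := by
  have hasSum_weighted (k : Θ → ℝ) :
      HasSum (fun i => ∑ θ, μ θ * p θ i * k θ) ((∑ θ, μ θ * k θ) * q) := by
    simp only [sum_mul, mul_right_comm _ _ (k _)]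
    exact hasSum_sum fun θ _ => (hp θ).mul_left (μ θ * k θ)
  exact le_of_mul_le_mul_right (hasSum_le h (hasSum_weighted f) (hasSum_weighted g)) hq

end Receiver

theorem fragility_no_persuasive_equilibrium_general
    {Θ A M Ω₁ Ω₂ : Type*} [Fintype Θ] [Fintype A] [Countable M]
    [MeasurableSpace M] [MeasurableSingletonClass M] [MeasurableSpace Ω₁] [MeasurableSpace Ω₂]
    (P₁ : Measure Ω₁) (P₂ : Measure Ω₂) [IsFiniteMeasure P₁] [IsFiniteMeasure P₂]
    (μ : Θ → ℝ) (hμ : ∀ θ, 0 ≤ μ θ) (uR : A × Θ → ℝ)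
    (uTil : A → M → Ω₁ → ℝ) (huTil : ∀ a m, Measurable (uTil a m))
    (U : A → Ω₂ → ℝ) (hU : ∀ a, Measurable (U a))
    (hnull : HyperplaneNull (P₂.map fun ω₂ a => U a ω₂))
    (𝓜 : Θ → Ω₁ × Ω₂ → M) (h𝓜 : ∀ θ, Measurable (𝓜 θ)) (r : M → A → ℝ)
    (pm : Θ → M → ℝ) (hpm : ∀ θ m, pm θ m = (P₁.prod P₂).real {ω | 𝓜 θ ω = m})
    (ν : M → Θ → ℝ)
    (hbayes : ∀ m, 0 < ∑ θ, μ θ * pm θ m → ∀ θ,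
      ν m θ = μ θ * pm θ m / ∑ θ', μ θ' * pm θ' m)
    (hsender : ∀ θ, ∀ᵐ ω ∂(P₁.prod P₂), ∀ m,
      senderPayoff uTil U (r m) m ω ≤ senderPayoff uTil U (r (𝓜 θ ω)) (𝓜 θ ω) ω)
    (hreceiver : ∀ m, 0 < ∑ θ, μ θ * pm θ m → ∀ a, 0 < r m a → ∀ a' : A,
      ∑ θ, ν m θ * uR (a', θ) ≤ ∑ θ, ν m θ * uR (a, θ)) :
    ∀ m, 0 < ∑ θ, μ θ * pm θ m → ∀ a, 0 < r m a → ∀ a' : A,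
      ∑ θ, μ θ * uR (a', θ) ≤ ∑ θ, μ θ * uR (a, θ) := by
  intro m hm a ha a'
  have hpm_nonneg (θ : Θ) (n : M) : 0 ≤ pm θ n := hpm θ n ▸ measureReal_nonneg
  obtain ⟨θ₀, -, hθ₀⟩ := exists_ne_zero_of_sum_ne_zero hm.ne'
  have hpm_pos : 0 < pm θ₀ m := (hpm_nonneg θ₀ m).lt_of_ne' (right_ne_zero_of_mul hθ₀)
  let C : Set M := {n | r n = r m}
  have class_prob_eq (θ : Θ) :
      (P₁.prod P₂).real (𝓜 θ ⁻¹' C) = (P₁.prod P₂).real (𝓜 θ₀ ⁻¹' C) := by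
    refine measureReal_congr ?_
    filter_upwards [ae_response_eq_of_maximizes P₁ huTil hU hnull (hsender θ) (hsender θ₀)]
      with ω hω
    exact congrArg (· = r m) hω
  have class_hasSum (θ : Θ) :
      HasSum (fun n : C => pm θ n) ((P₁.prod P₂).real (𝓜 θ₀ ⁻¹' C)) := by
    simp only [hpm, ← class_prob_eq θ]
    exact hasSum_measureReal_preimage_singleton _ C.to_countable
      fun n _ => h𝓜 θ (measurableSet_singleton n)
  have class_pos : 0 < (P₁.prod P₂).real (𝓜 θ₀ ⁻¹' C) :=
    hpm_pos.trans_le (le_hasSum (class_hasSum θ₀) ⟨m, rfl⟩ fun n _ => hpm_nonneg θ₀ n)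
  refine sum_mul_le_sum_mul_of_hasSum class_pos class_hasSum fun ⟨n, hn⟩ => ?_
  refine sum_mul_le_sum_mul_of_normalized (fun θ => mul_nonneg (hμ θ) (hpm_nonneg θ n))
    fun hpos => ?_
  simpa only [hbayes n hpos] using hreceiver n hpos a (congrFun hn a ▸ ha) a'

/-- Fragility (finitely many messages): if the sender's state-independent idiosyncratic
utility decomposes as `uTil (a, m, ω₁) + U (a, ω₂)` where the law of `ω₂ ↦ (U a ω₂)_a` is
absolutely continuous with respect to Lebesgue measure on `ℝ^A`, then in any equilibrium
every action in the support of the receiver's response to an on-path message is a best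
response to the prior; i.e. no equilibrium is persuasive. -/
theorem fragility_no_persuasive_equilibrium
    {Θ A M Ω₁ Ω₂ : Type*}
    [Fintype Θ] [Fintype A] [Fintype M]
    [MeasurableSpace M] [MeasurableSingletonClass M]
    [MeasurableSpace Ω₁] [MeasurableSpace Ω₂]
    (P₁ : Measure Ω₁) (P₂ : Measure Ω₂)
    [IsProbabilityMeasure P₁] [IsProbabilityMeasure P₂]
    (μ : Θ → ℝ) (hμnn : ∀ θ, 0 ≤ μ θ) (hμsum : ∑ θ, μ θ = 1)
    (uR : A × Θ → ℝ)
    (uTil : A → M → Ω₁ → ℝ) (huTilmeas : ∀ a m, Measurable (uTil a m))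
    (U : A → Ω₂ → ℝ) (hUmeas : ∀ a, Measurable (U a))
    -- the law of `ω₂ ↦ (U a ω₂)_{a ∈ A}` admits a density over `ℝ^A`
    (hdens : (P₂.map fun ω₂ => fun a : A => U a ω₂).AbsolutelyContinuous
      (volume : Measure (A → ℝ)))
    -- sender strategy
    (𝓜 : Θ → Ω₁ × Ω₂ → M) (h𝓜meas : ∀ θ, Measurable (𝓜 θ))
    -- receiver strategy
    (r : M → A → ℝ) (hrnn : ∀ m a, 0 ≤ r m a) (hrsum : ∀ m, ∑ a, r m a = 1)
    -- probability that message `m` is sent from state `θ`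
    (pm : Θ → M → ℝ)
    (hpm : ∀ θ m, pm θ m = ((P₁.prod P₂) {ω | 𝓜 θ ω = m}).toReal)
    -- posterior beliefs, given by Bayes' rule on path
    (ν : M → Θ → ℝ)
    (hbayes : ∀ m, 0 < ∑ θ, μ θ * pm θ m → ∀ θ,
      ν m θ = μ θ * pm θ m / ∑ θ', μ θ' * pm θ' m)
    -- (i) sender optimality, P-almost everywhere
    (hsender : ∀ θ, ∀ᵐ ω ∂(P₁.prod P₂), ∀ m' : M,
      ∑ a, r m' a * (uTil a m' ω.1 + U a ω.2) ≤
        ∑ a, r (𝓜 θ ω) a * (uTil a (𝓜 θ ω) ω.1 + U a ω.2))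
    -- (ii) receiver optimality at on-path messages
    (hreceiver : ∀ m, 0 < ∑ θ, μ θ * pm θ m → ∀ a, 0 < r m a → ∀ a' : A,
      ∑ θ, ν m θ * uR (a', θ) ≤ ∑ θ, ν m θ * uR (a, θ)) :
    -- conclusion: no persuasion
    ∀ m, 0 < ∑ θ, μ θ * pm θ m → ∀ a, 0 < r m a → ∀ a' : A,
      ∑ θ, μ θ * uR (a', θ) ≤ ∑ θ, μ θ * uR (a, θ) :=
  fragility_no_persuasive_equilibrium_general P₁ P₂ μ hμnn uR uTil huTilmeas U hUmeas
    ((hyperplaneNull_of_isAddHaarMeasure volume).mono_ac hdens) 𝓜 h𝓜meas r pm hpm ν hbayes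
    hsender hreceiver
end

section
/- Let A be a finite set, S a set of states, N ≥ 1, s_0, …, s_N ∈ S, u : A × S → ℝ, and q_0, …, q_N probability distributions on A; write ū(q, s) := ∑_{a ∈ A} q(a)·u(a, s). Assume: (i) for all 0 ≤ j < k ≤ N and all a ∈ supp q_j, a' ∈ supp q_k, u(a, s_j) − u(a', s_j) ≥ u(a, s_{j+1}) − u(a', s_{j+1}); (ii) for each 0 ≤ j < N there exists a pair (a, a') ∈ supp q_j × supp q_{j+1} for which the inequality in (i) with k = j+1 is strict; (iii) ū(q_{i−1}, s_i) = ū(q_i, s_i) for all i = 1, …, N. Then ū(q_0, s_0) > ū(q_N, s_0). (Step 1 of the proof of the ordinal-transparence theorem: under semi-local increasing differences, indifference of each state over its neighbouring message-actions along a path generates a strict preference of the initial state for its neighbouring action over the path's terminal action.) -/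
open Finset

/-!
Fix the terminal action `q N` and let `U j` be the advantage of `q j` over `q N` in state `s j`.
By increasing differences, `U j` is at least the advantage of `q j` over `q N` in state `s (j + 1)`,
which is at least `U (j + 1)` because state `s (j + 1)` likes `q j` at least as much as `q (j + 1)`.
So `U` decreases weakly along the chain to `U N = 0`, and strictly wherever a strict pair occurs.
-/

section IncreasingDifferences

variable {R A : Type*} [CommRing R]

lemma sub_dotProduct_eq_sum_mul_sub [Fintype A] {p r : A → R}
    (hp : ∑ a, p a = 1) (hr : ∑ a, r a = 1) (v : A → R) :
    (p - r) ⬝ᵥ v = ∑ x : A × A, p x.1 * r x.2 * (v x.1 - v x.2) := by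
  have first_marginal : ∑ a, ∑ b, p a * r b * v a = p ⬝ᵥ v := by
    simp only [mul_right_comm _ (r _), ← mul_sum, hr, mul_one, dotProduct]
  have second_marginal : ∑ a, ∑ b, p a * r b * v b = r ⬝ᵥ v := by
    simp only [mul_assoc, ← mul_sum, ← sum_mul, hp, one_mul, dotProduct]
  simp only [sub_dotProduct, Fintype.sum_prod_type, mul_sub, sum_sub_distrib,
    first_marginal, second_marginal]

variable [PartialOrder R] [IsStrictOrderedRing R] {p r v w : A → R}

lemma mul_mul_sub_le_of_increasing_differences (hp : 0 ≤ p) (hr : 0 ≤ r)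
    (h : ∀ a b, 0 < p a → 0 < r b → w a - w b ≤ v a - v b) (a b : A) :
    p a * r b * (w a - w b) ≤ p a * r b * (v a - v b) := by
  rcases (hp a).eq_or_lt with ha | ha
  · simp [← ha]
  rcases (hr b).eq_or_lt with hb | hb
  · simp [← hb]
  exact mul_le_mul_of_nonneg_left (h a b ha hb) (mul_pos ha hb).le

variable [Fintype A]

theorem sub_dotProduct_le_of_increasing_differences
    (hp : p ∈ stdSimplex R A) (hr : r ∈ stdSimplex R A)
    (h : ∀ a b, 0 < p a → 0 < r b → w a - w b ≤ v a - v b) :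
    (p - r) ⬝ᵥ w ≤ (p - r) ⬝ᵥ v := by
  simp only [sub_dotProduct_eq_sum_mul_sub hp.2 hr.2]
  exact sum_le_sum fun x _ ↦ mul_mul_sub_le_of_increasing_differences hp.1 hr.1 h x.1 x.2

theorem sub_dotProduct_lt_of_increasing_differences
    (hp : p ∈ stdSimplex R A) (hr : r ∈ stdSimplex R A)
    (h : ∀ a b, 0 < p a → 0 < r b → w a - w b ≤ v a - v b)
    (hlt : ∃ a b, 0 < p a ∧ 0 < r b ∧ w a - w b < v a - v b) :
    (p - r) ⬝ᵥ w < (p - r) ⬝ᵥ v := by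
  obtain ⟨a, b, ha, hb, hab⟩ := hlt
  simp only [sub_dotProduct_eq_sum_mul_sub hp.2 hr.2]
  exact sum_lt_sum (fun x _ ↦ mul_mul_sub_le_of_increasing_differences hp.1 hr.1 h x.1 x.2)
    ⟨(a, b), mem_univ _, mul_lt_mul_of_pos_left hab (mul_pos ha hb)⟩

/-- Here `v i a` is the utility `u (a, s i)` of action `a` in the `i`-th state of the chain. -/
theorem slid_chain_strict_preference_general {N : ℕ} {q v : ℕ → A → R}
    (hq : ∀ i ≤ N, q i ∈ stdSimplex R A)
    (hslid : ∀ j < N, ∀ a b, 0 < q j a → 0 < q N b →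
      v (j + 1) a - v (j + 1) b ≤ v j a - v j b)
    (hstrict : ∃ j < N, ∃ a b, 0 < q j a ∧ 0 < q N b ∧
      v (j + 1) a - v (j + 1) b < v j a - v j b)
    (hpref : ∀ j < N, q (j + 1) ⬝ᵥ v (j + 1) ≤ q j ⬝ᵥ v (j + 1)) :
    q N ⬝ᵥ v 0 < q 0 ⬝ᵥ v 0 := by
  let U (j : ℕ) : R := (q j - q N) ⬝ᵥ v j
  have U_succ_le {j : ℕ} (hj : j < N) : U (j + 1) ≤ (q j - q N) ⬝ᵥ v (j + 1) := by
    simpa only [U, sub_dotProduct] using sub_le_sub_right (hpref j hj) _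
  have step_nonneg (j : ℕ) (hj : j < N) : 0 ≤ U j - U (j + 1) :=
    sub_nonneg.2 <| (U_succ_le hj).trans <|
      sub_dotProduct_le_of_increasing_differences (hq j hj.le) (hq N le_rfl) (hslid j hj)
  obtain ⟨k, hk, hpair⟩ := hstrict
  have step_pos : 0 < U k - U (k + 1) :=
    sub_pos.2 <| (U_succ_le hk).trans_lt <|
      sub_dotProduct_lt_of_increasing_differences (hq k hk.le) (hq N le_rfl) (hslid k hk) hpair
  have U_zero_pos : 0 < U 0 :=
    calc 0 < ∑ j ∈ range N, (U j - U (j + 1)) :=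
          sum_pos' (fun j hj ↦ step_nonneg j (mem_range.1 hj)) ⟨k, mem_range.2 hk, step_pos⟩
      _ = U 0 - U N := sum_range_sub' U N
      _ = U 0 := by simp [U]
  simpa only [U, sub_dotProduct, sub_pos] using U_zero_pos

end IncreasingDifferences

/-- Step 1 of the ordinal-transparence theorem: along a chain `s 0, q 0, s 1, q 1, …,
s N, q N` of states and mixed actions, semi-local increasing differences (with a strict
pair between consecutive actions) together with the indifference of each state `s i`
between its neighbouring actions `q (i-1)` and `q i` implies that the initial state
`s 0` strictly prefers `q 0` to the terminal action `q N`. -/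
theorem slid_chain_strict_preference {A S : Type*} [Fintype A]
    (N : ℕ) (hN : 1 ≤ N) (s : ℕ → S) (u : A × S → ℝ)
    (q : ℕ → A → ℝ)
    (hqnn : ∀ i, i ≤ N → ∀ a, 0 ≤ q i a)
    (hqsum : ∀ i, i ≤ N → ∑ a, q i a = 1)
    -- (i) semi-local increasing differences along subpaths
    (hslid : ∀ j k, j < k → k ≤ N → ∀ a a' : A, 0 < q j a → 0 < q k a' →
      u (a, s (j + 1)) - u (a', s (j + 1)) ≤ u (a, s j) - u (a', s j))
    -- (ii) a strict pair between consecutive actions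
    (hstrict : ∀ j, j < N → ∃ a a' : A, 0 < q j a ∧ 0 < q (j + 1) a' ∧
      u (a, s (j + 1)) - u (a', s (j + 1)) < u (a, s j) - u (a', s j))
    -- (iii) indifference of each intermediate state over its neighbouring actions
    (hindiff : ∀ i, 1 ≤ i → i ≤ N →
      ∑ a, q (i - 1) a * u (a, s i) = ∑ a, q i a * u (a, s i)) :
    ∑ a, q N a * u (a, s 0) < ∑ a, q 0 a * u (a, s 0) := by
  obtain ⟨n, rfl⟩ := Nat.exists_eq_add_of_le' hN
  exact slid_chain_strict_preference_general (v := fun i a ↦ u (a, s i))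
    (fun i hi ↦ ⟨hqnn i hi, hqsum i hi⟩) (fun j hj ↦ hslid j (n + 1) hj le_rfl)
    ⟨n, n.lt_succ_self, hstrict n n.lt_succ_self⟩
    (fun j hj ↦ (hindiff (j + 1) j.succ_pos hj).ge)
end
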